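/- arXiv:1509.02846 — 8 statements merged into one kernel-verified Lean document; each statement's English description precedes it below -/
import Mathlib

section
/- Let z1 ∈ ℝ be a barrier, β ∈ (−1,1), μ ∈ ℝ, and let λ ∈ ℂ be such that μ² + 2λ ∉ (−∞,0]; write w = √(μ²+2λ) (principal square root, so Re w > 0). Define u±(x) = exp(−μx ∓ w x), coefficients A = (1 + βμ/w)/(1+β), B = (1−A) e^{2 w z1}, F = (1 + βμ/w)/(1−β), E = (1−F) e^{−2 w z1}, and the piecewise functions U−(x) = u−(x) for x ≤ z1 and U−(x) = A u−(x) + B u+(x) for x ≥ z1; U+(x) = E u−(x) + F u+(x) for x ≤ z1 and U+(x) = u+(x) for x ≥ z1. Let h(x) = k(x) e^{2μx} with k(x) = (1−β)/2 for x < z1 and k(x) = (1+β)/2 for x ≥ z1. Then U− and U+ are continuous at z1, and for every x ≠ z1 the weighted Wronskian h(x)(U−(x) U+′(x) − U−′(x) U+(x)) is constant, equal to −(w + βμ). -/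
open Complex

/-!
Away from the barrier the pair `(U₋, U₊)` is either `(u₋, E u₋ + F u₊)` or `(A u₋ + B u₊, u₊)`. The
Wronskian is bilinear and alternating, so it equals `F W(u₋, u₊)` on the left and `A W(u₋, u₊)` on
the right, whatever `B` and `E` are; these only serve to make the two pieces agree at `z1`. Since
`exp (2 μ x) W(u₋, u₊) = -2 w`, the weights `(1 ∓ β) / 2` are exactly what makes both sides equal to
`-(w + β μ)`.
-/

open Set Filter Topology

section Wronskian

variable {𝕜 A : Type*} [NontriviallyNormedField 𝕜] [NormedCommRing A] [NormedAlgebra 𝕜 A]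
  {f f₁ f₂ g g₁ g₂ : 𝕜 → A} {x : 𝕜}

/-- The Wronskian `f g' - f' g` at a point, for functions of one variable with values in a
commutative normed algebra. As it is written with `deriv`, it is meaningful only where both
functions are differentiable. -/
noncomputable def wronskian (f g : 𝕜 → A) (x : 𝕜) : A :=
  f x * deriv g x - deriv f x * g x

theorem wronskian_congr (hf : f₁ =ᶠ[𝓝 x] f₂) (hg : g₁ =ᶠ[𝓝 x] g₂) :
    wronskian f₁ g₁ x = wronskian f₂ g₂ x := by
  simp only [wronskian, hf.eq_of_nhds, hg.eq_of_nhds, hf.deriv_eq, hg.deriv_eq]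

theorem wronskian_linear_combination (hf : DifferentiableAt 𝕜 f x) (hg : DifferentiableAt 𝕜 g x)
    (a b c d : A) :
    wronskian (fun y ↦ a * f y + b * g y) (fun y ↦ c * f y + d * g y) x =
      (a * d - b * c) * wronskian f g x := by
  have deriv_combination (p q : A) :
      deriv (fun y ↦ p * f y + q * g y) x = p * deriv f x + q * deriv g x :=
    ((hf.hasDerivAt.const_mul p).add (hg.hasDerivAt.const_mul q)).deriv
  simp only [wronskian, deriv_combination]
  ring

theorem wronskian_left_linear_combination (hf : DifferentiableAt 𝕜 f x)
    (hg : DifferentiableAt 𝕜 g x) (a b : A) :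
    wronskian (fun y ↦ a * f y + b * g y) g x = a * wronskian f g x := by
  simpa using wronskian_linear_combination hf hg a b 0 1

theorem wronskian_right_linear_combination (hf : DifferentiableAt 𝕜 f x)
    (hg : DifferentiableAt 𝕜 g x) (c d : A) :
    wronskian f (fun y ↦ c * f y + d * g y) x = d * wronskian f g x := by
  simpa using wronskian_linear_combination hf hg 1 0 c d

end Wronskian

section Piecewise

theorem piecewise_eventuallyEq_of_mem_nhds {X Y : Type*} [TopologicalSpace X] {s : Set X}
    [∀ y, Decidable (y ∈ s)] {x : X} (hs : s ∈ 𝓝 x) (f g : X → Y) : s.piecewise f g =ᶠ[𝓝 x] f :=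
  (s.piecewise_eqOn f g).eventuallyEq_of_mem hs

theorem piecewise_eventuallyEq_of_compl_mem_nhds {X Y : Type*} [TopologicalSpace X] {s : Set X}
    [∀ y, Decidable (y ∈ s)] {x : X} (hs : sᶜ ∈ 𝓝 x) (f g : X → Y) : s.piecewise f g =ᶠ[𝓝 x] g :=
  (s.piecewise_eqOn_compl f g).eventuallyEq_of_mem hs

theorem continuous_piecewise_Iic {X Y : Type*} [LinearOrder X] [TopologicalSpace X]
    [OrderClosedTopology X] [TopologicalSpace Y] {z : X} [∀ y, Decidable (y ∈ Iic z)] {f g : X → Y}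
    (hf : Continuous f) (hg : Continuous g) (hz : f z = g z) :
    Continuous ((Iic z).piecewise f g) :=
  hf.piecewise (fun _ hx ↦ frontier_Iic_subset z hx ▸ hz) hg

theorem differentiableAt_piecewise_Iic {E : Type*} [NormedAddCommGroup E] [NormedSpace ℝ E]
    {f g : ℝ → E} {x z : ℝ} [∀ y, Decidable (y ∈ Iic z)] (hf : DifferentiableAt ℝ f x)
    (hg : DifferentiableAt ℝ g x) (hx : x ≠ z) :
    DifferentiableAt ℝ ((Iic z).piecewise f g) x := by
  obtain hlt | hgt := hx.lt_or_gt
  · exact hf.congr_of_eventuallyEq (piecewise_eventuallyEq_of_mem_nhds (Iic_mem_nhds hlt) f g)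
  · have hmem : (Iic z)ᶜ ∈ 𝓝 x := isClosed_Iic.compl_mem_nhds hgt.not_ge
    exact hg.congr_of_eventuallyEq (piecewise_eventuallyEq_of_compl_mem_nhds hmem f g)

theorem wronskian_piecewise_Iic_linear_combination {A : Type*} [NormedCommRing A]
    [NormedAlgebra ℝ A] {f g : ℝ → A} {x z : ℝ} [∀ y, Decidable (y ∈ Iic z)]
    (hf : DifferentiableAt ℝ f x) (hg : DifferentiableAt ℝ g x) (hx : x ≠ z) (a b c d : A) :
    wronskian ((Iic z).piecewise f fun y ↦ a * f y + b * g y)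
        ((Iic z).piecewise (fun y ↦ c * f y + d * g y) g) x =
      (if x < z then d else a) * wronskian f g x := by
  obtain hlt | hgt := hx.lt_or_gt
  · have hmem : Iic z ∈ 𝓝 x := Iic_mem_nhds hlt
    rw [if_pos hlt, ← wronskian_right_linear_combination hf hg c d]
    exact wronskian_congr (piecewise_eventuallyEq_of_mem_nhds hmem _ _)
      (piecewise_eventuallyEq_of_mem_nhds hmem _ _)
  · have hmem : (Iic z)ᶜ ∈ 𝓝 x := isClosed_Iic.compl_mem_nhds hgt.not_ge
    rw [if_neg hgt.not_gt, ← wronskian_left_linear_combination hf hg a b]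
    exact wronskian_congr (piecewise_eventuallyEq_of_compl_mem_nhds hmem _ _)
      (piecewise_eventuallyEq_of_compl_mem_nhds hmem _ _)

end Piecewise

section Exponential

theorem hasDerivAt_cexp_ofReal_mul (a : ℂ) (x : ℝ) :
    HasDerivAt (fun y : ℝ ↦ cexp (a * y)) (a * cexp (a * x)) x := by
  simpa [mul_comm] using ((hasDerivAt_id x).ofReal_comp.const_mul a).cexp

theorem differentiable_cexp_ofReal_mul (a : ℂ) : Differentiable ℝ fun x : ℝ ↦ cexp (a * x) :=
  fun x ↦ (hasDerivAt_cexp_ofReal_mul a x).differentiableAt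

theorem wronskian_cexp_ofReal_mul (a b : ℂ) (x : ℝ) :
    wronskian (fun y : ℝ ↦ cexp (a * y)) (fun y : ℝ ↦ cexp (b * y)) x =
      (b - a) * cexp ((a + b) * x) := by
  simp only [wronskian, (hasDerivAt_cexp_ofReal_mul _ x).deriv, add_mul a b, exp_add]
  ring

theorem cexp_mul_wronskian_cexp_ofReal_mul {a b c : ℂ} (habc : a + b + c = 0) (x : ℝ) :
    cexp (c * x) * wronskian (fun y : ℝ ↦ cexp (a * y)) (fun y : ℝ ↦ cexp (b * y)) x = b - a := by
  have hexp : c * x + (a + b) * x = 0 := by linear_combination (x : ℂ) * habc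
  rw [wronskian_cexp_ofReal_mul, mul_left_comm, ← exp_add, hexp, exp_zero, mul_one]

end Exponential

theorem ite_div_two_mul_ite_div {K : Type*} [Field K] {β : K} (hβ₁ : β ≠ 1) (hβ₂ : β ≠ -1)
    (p : Prop) [Decidable p] (c : K) :
    (if p then (1 - β) / 2 else (1 + β) / 2) * (if p then c / (1 - β) else c / (1 + β)) =
      c / 2 := by
  have h_sub : 1 - β ≠ 0 := sub_ne_zero.2 hβ₁.symm
  have h_add : 1 + β ≠ 0 := fun h ↦ hβ₂ (eq_neg_of_add_eq_zero_right h)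
  split_ifs <;> field_simp

theorem wronskian_one_barrier_drift_general (z1 : ℝ) (β μ w : ℂ) (hβ₁ : β ≠ 1) (hβ₂ : β ≠ -1)
    (hw : w ≠ 0) :
    let um : ℝ → ℂ := fun x ↦ cexp (-μ * x + w * x)
    let up : ℝ → ℂ := fun x ↦ cexp (-μ * x - w * x)
    let A : ℂ := (1 + β * μ / w) / (1 + β)
    let B : ℂ := (1 - A) * cexp (2 * w * z1)
    let F : ℂ := (1 + β * μ / w) / (1 - β)
    let E : ℂ := (1 - F) * cexp (-2 * w * z1)
    let Um : ℝ → ℂ := fun x ↦ if x ≤ z1 then um x else A * um x + B * up x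
    let Up : ℝ → ℂ := fun x ↦ if x ≤ z1 then E * um x + F * up x else up x
    let k : ℝ → ℂ := fun x ↦ if x < z1 then (1 - β) / 2 else (1 + β) / 2
    let h : ℝ → ℂ := fun x ↦ k x * cexp (2 * μ * x)
    ContinuousAt Um z1 ∧ ContinuousAt Up z1 ∧
      ∀ x : ℝ, x ≠ z1 → ∃ dm dp : ℂ,
        HasDerivAt Um dm x ∧ HasDerivAt Up dp x ∧
          h x * (Um x * dp - dm * Up x) = -(w + β * μ) := by
  intro um up A B F E Um Up k h
  have hum : um = fun x : ℝ ↦ cexp ((-μ + w) * x) := by simp only [um, add_mul]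
  have hup : up = fun x : ℝ ↦ cexp ((-μ - w) * x) := by simp only [up, sub_mul]
  have dum : Differentiable ℝ um := hum ▸ differentiable_cexp_ofReal_mul _
  have dup : Differentiable ℝ up := hup ▸ differentiable_cexp_ofReal_mul _
  have hUm : um z1 = A * um z1 + B * up z1 := by
    have : cexp (2 * w * z1) * up z1 = um z1 := by simp only [um, up, ← exp_add]; ring_nf
    linear_combination (A - 1) * this
  have hUp : E * um z1 + F * up z1 = up z1 := by
    have : cexp (-2 * w * z1) * um z1 = up z1 := by simp only [um, up, ← exp_add]; ring_nf
    linear_combination (1 - F) * this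
  refine ⟨(continuous_piecewise_Iic dum.continuous (by fun_prop) hUm).continuousAt,
    (continuous_piecewise_Iic (by fun_prop) dup.continuous hUp).continuousAt, fun x hx ↦
    ⟨deriv Um x, deriv Up x, (differentiableAt_piecewise_Iic (dum x) (by fun_prop) hx).hasDerivAt,
      (differentiableAt_piecewise_Iic (by fun_prop) (dup x) hx).hasDerivAt, ?_⟩⟩
  have hW : cexp (2 * μ * x) * wronskian um up x = -2 * w := by
    rw [hum, hup, cexp_mul_wronskian_cexp_ofReal_mul (by ring)]
    ring
  have hk : k x * (if x < z1 then F else A) = (1 + β * μ / w) / 2 :=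
    ite_div_two_mul_ite_div hβ₁ hβ₂ _ _
  have hglue : wronskian Um Up x = (if x < z1 then F else A) * wronskian um up x :=
    wronskian_piecewise_Iic_linear_combination (dum x) (dup x) hx A B E F
  calc h x * wronskian Um Up x
      = k x * (if x < z1 then F else A) * (cexp (2 * μ * x) * wronskian um up x) := by
        rw [hglue]
        ring
    _ = -(w + β * μ) := by
        rw [hk, hW]
        field_simp

/-- continuity at the barrier and constancy of the weighted Wronskian
for the eigenfunctions of the generator of the β-SBM with drift μ. -/
theorem wronskian_one_barrier_drift
    (z1 β μ : ℝ) (hβ : β ∈ Set.Ioo (-1 : ℝ) 1) (lam : ℂ)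
    (hlam : ∀ r : ℝ, r ≤ 0 → (μ : ℂ) ^ 2 + 2 * lam ≠ (r : ℂ)) :
    let w : ℂ := ((μ : ℂ) ^ 2 + 2 * lam) ^ ((1 : ℂ) / 2)
    let um : ℝ → ℂ := fun x => Complex.exp (-(μ : ℂ) * x + w * x)
    let up : ℝ → ℂ := fun x => Complex.exp (-(μ : ℂ) * x - w * x)
    let A : ℂ := (1 + (β : ℂ) * μ / w) / (1 + β)
    let B : ℂ := (1 - A) * Complex.exp (2 * w * z1)
    let F : ℂ := (1 + (β : ℂ) * μ / w) / (1 - β)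
    let E : ℂ := (1 - F) * Complex.exp (-2 * w * z1)
    let Um : ℝ → ℂ := fun x => if x ≤ z1 then um x else A * um x + B * up x
    let Up : ℝ → ℂ := fun x => if x ≤ z1 then E * um x + F * up x else up x
    let k : ℝ → ℝ := fun x => if x < z1 then (1 - β) / 2 else (1 + β) / 2
    let h : ℝ → ℝ := fun x => k x * Real.exp (2 * μ * x)
    ContinuousAt Um z1 ∧ ContinuousAt Up z1 ∧
      ∀ x : ℝ, x ≠ z1 → ∃ dm dp : ℂ,
        HasDerivAt Um dm x ∧ HasDerivAt Up dp x ∧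
          (h x : ℂ) * (Um x * dp - dm * Up x) = -(w + (β : ℂ) * μ) := by
  have hw : ((μ : ℂ) ^ 2 + 2 * lam) ^ ((1 : ℂ) / 2) ≠ 0 := by simpa using hlam 0 le_rfl
  simpa [apply_ite ofReal] using wronskian_one_barrier_drift_general z1 β μ _
    (by exact_mod_cast hβ.2.ne) (by exact_mod_cast hβ.1.ne') hw
end

section
/- Let t > 0, x, y ∈ ℝ, and let ℓ : ℝ → [0,∞) be any function with ℓ(u) → 0 as |u| → ∞. Then lim_{|u|→∞} ∫_0^{ℓ(u)} exp((v+iu)² t/2) · exp(−(v+iu)|x−y|) · (Σ_{j=1}^4 c_j(y) e^{−(v+iu) a_j(x,y)}) / (β1 β2 e^{−2(v+iu) z} + 1) dv = 0. (This is the statement that the integral of ξ ↦ e^{ξ²t/2} Ḡ(x,y;ξ) over the horizontal segment ρ_M from (0,u) to (ℓ(u),u) tends to 0, allowing the contour φ(Γ) to be deformed to the imaginary axis.) -/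
/-!
The segment shrinks to its left endpoint, which lies on the imaginary axis, so it suffices that the
integrand is bounded near that axis, uniformly in `u`. The factors `exp (-ξ a)` have modulus
`exp (-a Re ξ)`, and the Gaussian has modulus `exp (((Re ξ)² - (Im ξ)²) t / 2)`, at most
`exp ((Re ξ)² t / 2)`. The modulus of `β1 β2 exp (-2 ξ z)` tends to `|β1 β2| < 1` as `Re ξ → 0`, so
the denominator stays away from `0`. Boundedness near the axis is encoded as being `O(1)` along
`comap re (𝓝 0)`.
-/

open Complex MeasureTheory

/-- The coefficients c_j(y) for the (β1,β2)-SBM. -/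
noncomputable def cSBM (z1 z2 β1 β2 y : ℝ) : Fin 4 → ℝ :=
  ![1,
    (2 * (if z1 ≤ y then (1 : ℝ) else 0) - 1) * β1,
    (2 * (if z2 ≤ y then (1 : ℝ) else 0) - 1) * β2,
    (1 - 2 * (if z1 ≤ y ∧ y < z2 then (1 : ℝ) else 0)) * (β1 * β2)]

/-- The exponents a_j(x,y) for the (β1,β2)-SBM. -/
noncomputable def aSBM (z1 z2 x y : ℝ) : Fin 4 → ℝ :=
  ![0,
    |y - z1| + |x - z1| - |y - x|,
    |y - z2| + |x - z2| - |y - x|,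
    2 * max (z2 - max x (max y z1)) 0 + 2 * max (min x (min y z2) - z1) 0]

section Asymptotics

open Filter Topology Asymptotics

theorem tendsto_intervalIntegral_zero_of_isBigO_one {α E : Type*} [NormedAddCommGroup E]
    [NormedSpace ℝ E] {l : Filter α} {f : α → ℝ → E} {p q : α → ℝ} {c : ℝ}
    (hf : Function.uncurry f =O[l ×ˢ 𝓝 c] fun _ => (1 : ℝ))
    (hp : Tendsto p l (𝓝 c)) (hq : Tendsto q l (𝓝 c)) :
    Tendsto (fun i => ∫ v in p i..q i, f i v) l (𝓝 0) := by
  obtain ⟨C, hC⟩ := hf.bound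
  obtain ⟨P, hP, Q, hQ, hPQ⟩ := eventually_prod_iff.mp hC
  have h_segment : ∀ᶠ i in l, ∀ v ∈ Set.uIcc (p i) (q i), Q v :=
    (hp.uIcc hq).eventually hQ.smallSets
  have h_length : Tendsto (fun i => C * |q i - p i|) l (𝓝 0) := by
    simpa using (hq.sub hp).abs.const_mul C
  refine squeeze_zero_norm' ?_ h_length
  filter_upwards [hP, h_segment] with i hi h_seg
  refine intervalIntegral.norm_integral_le_of_norm_le_const fun v hv => ?_
  simpa using hPQ hi (h_seg v (Set.uIoc_subset_uIcc hv))

theorem isBigO_one_inv_add_one_of_tendsto_norm {α 𝕜 : Type*} [NormedDivisionRing 𝕜]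
    {l : Filter α} {g : α → 𝕜} {r : ℝ} (hr : r < 1) (hg : Tendsto (fun i => ‖g i‖) l (𝓝 r)) :
    (fun i => (g i + 1)⁻¹) =O[l] fun _ => (1 : ℝ) := by
  obtain ⟨s, hrs, hs⟩ := exists_between hr
  refine IsBigO.of_bound (1 - s)⁻¹ ?_
  filter_upwards [hg.eventually_le_const hrs] with i hi
  have h_lower : 1 - s ≤ ‖g i + 1‖ :=
    calc 1 - s ≤ ‖(1 : 𝕜)‖ - ‖g i‖ := by rw [norm_one]; gcongr
      _ ≤ ‖g i + 1‖ := by rw [add_comm]; exact norm_sub_le_norm_add _ _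
  simpa using inv_anti₀ (sub_pos.mpr hs) h_lower

theorem isBigO_one_cexp_of_isBoundedUnder_re {α : Type*} {l : Filter α} {f : α → ℂ}
    (hf : l.IsBoundedUnder (· ≤ ·) fun i => (f i).re) :
    (fun i => exp (f i)) =O[l] fun _ => (1 : ℝ) := by
  rw [← isBigO_norm_left]
  simpa only [norm_exp] using Real.isBigO_exp_comp_one.mpr hf

theorem tendsto_re_neg_mul_ofReal (σ a : ℝ) :
    Tendsto (fun ξ : ℂ => (-ξ * a).re) (comap re (𝓝 σ)) (𝓝 (-σ * a)) := by
  simpa only [re_mul_ofReal, neg_re] using tendsto_comap.neg.mul_const a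

theorem isBigO_one_cexp_neg_mul_ofReal (σ a : ℝ) :
    (fun ξ : ℂ => exp (-ξ * a)) =O[comap re (𝓝 σ)] fun _ => (1 : ℝ) :=
  isBigO_one_cexp_of_isBoundedUnder_re (tendsto_re_neg_mul_ofReal σ a).isBoundedUnder_le

theorem re_sq_mul_ofReal_div_two_le {t : ℝ} (ht : 0 ≤ t) (ξ : ℂ) :
    (ξ ^ 2 * t / 2).re ≤ ξ.re ^ 2 * t / 2 := by
  have h_re : (ξ ^ 2 * t / 2).re = (ξ.re ^ 2 - ξ.im ^ 2) * t / 2 := by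
    simp [sq]
  rw [h_re]
  gcongr
  exact sub_le_self _ (sq_nonneg _)

theorem isBigO_one_cexp_sq_mul_div_two (σ : ℝ) {t : ℝ} (ht : 0 ≤ t) :
    (fun ξ : ℂ => exp (ξ ^ 2 * t / 2)) =O[comap re (𝓝 σ)] fun _ => (1 : ℝ) := by
  have h_re : Tendsto (fun ξ : ℂ => ξ.re ^ 2 * t / 2) (comap re (𝓝 σ)) (𝓝 (σ ^ 2 * t / 2)) :=
    ((tendsto_comap.pow 2).mul_const t).div_const 2
  exact isBigO_one_cexp_of_isBoundedUnder_re <|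
    h_re.isBoundedUnder_le.mono_le (.of_forall (re_sq_mul_ofReal_div_two_le ht))

theorem isBigO_one_inv_mul_cexp_add_one {b : ℂ} (hb : ‖b‖ < 1) (z : ℝ) :
    (fun ξ : ℂ => (b * exp (-2 * ξ * z) + 1)⁻¹) =O[comap re (𝓝 0)] fun _ => (1 : ℝ) := by
  refine isBigO_one_inv_add_one_of_tendsto_norm hb ?_
  have h_re : Tendsto (fun ξ : ℂ => (-2 * ξ * z).re) (comap re (𝓝 0)) (𝓝 0) := by
    simpa [mul_assoc, mul_left_comm] using tendsto_re_neg_mul_ofReal 0 (2 * z)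
  simpa [norm_exp] using h_re.rexp.const_mul ‖b‖

theorem isBigO_one_cexp_sq_mul_sum_div {ι : Type*} [Fintype ι] {t : ℝ} (ht : 0 ≤ t)
    {b : ℂ} (hb : ‖b‖ < 1) (r z : ℝ) (c : ι → ℂ) (a : ι → ℝ) :
    (fun ξ : ℂ => exp (ξ ^ 2 * t / 2) * exp (-ξ * r) * (∑ j, c j * exp (-ξ * a j)) /
      (b * exp (-2 * ξ * z) + 1)) =O[comap re (𝓝 0)] fun _ => (1 : ℝ) := by
  have h_sum : (fun ξ : ℂ => ∑ j, c j * exp (-ξ * a j)) =O[comap re (𝓝 0)] fun _ => (1 : ℝ) :=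
    IsBigO.fun_sum fun j _ => (isBigO_one_cexp_neg_mul_ofReal 0 (a j)).const_mul_left (c j)
  simpa [div_eq_mul_inv] using
    (((isBigO_one_cexp_sq_mul_div_two 0 ht).mul (isBigO_one_cexp_neg_mul_ofReal 0 r)).mul
      h_sum).mul (isBigO_one_inv_mul_cexp_add_one hb z)

theorem segment_integral_tendsto_zero_general {α ι : Type*} [Fintype ι] {l : Filter α}
    {t : ℝ} (ht : 0 ≤ t) {b : ℂ} (hb : ‖b‖ < 1) (r z : ℝ) (c : ι → ℂ) (a : ι → ℝ)
    (u : α → ℝ) {ℓ : α → ℝ} (hℓ : Tendsto ℓ l (𝓝 0)) :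
    Tendsto
      (fun i => ∫ v in (0 : ℝ)..(ℓ i),
        exp (((v : ℂ) + u i * I) ^ 2 * t / 2) * exp (-((v : ℂ) + u i * I) * r) *
          (∑ j, c j * exp (-((v : ℂ) + u i * I) * a j)) /
          (b * exp (-2 * ((v : ℂ) + u i * I) * z) + 1))
      l (𝓝 0) := by
  have h_axis : Tendsto (fun p : α × ℝ => (p.2 : ℂ) + u p.1 * I) (l ×ˢ 𝓝 0) (comap re (𝓝 0)) :=
    tendsto_comap_iff.mpr (by simpa [Function.comp_def] using tendsto_snd)
  exact tendsto_intervalIntegral_zero_of_isBigO_one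
    ((isBigO_one_cexp_sq_mul_sum_div ht hb r z c a).comp_tendsto h_axis) tendsto_const_nhds hℓ

end Asymptotics

/-- the integral of ξ ↦ e^{ξ²t/2} Ḡ(x,y;ξ) over the horizontal segment
ρ_M from (0,u) to (ℓ(u),u) tends to 0 as |u| → ∞. -/
theorem segment_integral_tendsto_zero
    (z1 z2 : ℝ) (hz : z1 < z2) (β1 β2 : ℝ)
    (hβ1 : β1 ∈ Set.Ioo (-1 : ℝ) 1) (hβ2 : β2 ∈ Set.Ioo (-1 : ℝ) 1)
    (t : ℝ) (ht : 0 < t) (x y : ℝ)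
    (ℓ : ℝ → ℝ) (hℓ0 : ∀ u, 0 ≤ ℓ u)
    (hℓ : Filter.Tendsto ℓ (Filter.comap (fun u : ℝ => |u|) Filter.atTop) (nhds 0)) :
    Filter.Tendsto
      (fun u : ℝ =>
        ∫ v in (0 : ℝ)..(ℓ u),
          Complex.exp (((v : ℂ) + u * Complex.I) ^ 2 * t / 2) *
            Complex.exp (-((v : ℂ) + u * Complex.I) * |x - y|) *
            (∑ j : Fin 4, (cSBM z1 z2 β1 β2 y j : ℂ) *
              Complex.exp (-((v : ℂ) + u * Complex.I) * (aSBM z1 z2 x y j))) /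
            ((β1 * β2 : ℂ) * Complex.exp (-2 * ((v : ℂ) + u * Complex.I) * (z2 - z1)) + 1))
      (Filter.comap (fun u : ℝ => |u|) Filter.atTop) (nhds 0) := by
  have hβ : ‖(β1 * β2 : ℂ)‖ < 1 := by
    simpa using mul_lt_one_of_nonneg_of_lt_one_left (abs_nonneg β1) (abs_lt.mpr hβ1)
      (abs_lt.mpr hβ2).le
  simpa only [ofReal_sub, id_eq] using
    segment_integral_tendsto_zero_general ht.le hβ |x - y| (z2 - z1)
      (fun j => cSBM z1 z2 β1 β2 y j) (aSBM z1 z2 x y) id hℓ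
end

section
/- (Transition density of the (β1,β2)-skew Brownian motion without drift.) For every t > 0 and x, y ∈ ℝ, (1/2π) ∫_ℝ e^{−w²t/2} e^{−iw|x−y|} (Σ_{j=1}^4 c_j(y) e^{−iw a_j(x,y)}) / (β1 β2 e^{−2iwz} + 1) dw = (2πt)^{−1/2} e^{−(x−y)²/(2t)} Σ_{k=0}^∞ (−β1β2)^k Σ_{j=1}^4 c_j(y) exp(−(a_j(x,y) + 2zk)²/(2t)) · exp(−|x−y|(a_j(x,y) + 2zk)/t), where both the integral and the double series converge absolutely. In other words, the transition density p^{(β1,β2)}(t,x,y) of the (β1,β2)-SBM, given by the left-hand integral, equals p^{(0,0)}(t,x,y) Σ_{k=0}^∞ (−β1β2)^k Σ_{j=1}^4 c_j(y) e^{−(a_j+2zk)²/(2t)} e^{−|x−y|(a_j+2zk)/t}, with p^{(0,0)}(t,x,y) = (2πt)^{−1/2} e^{−(x−y)²/(2t)} the Brownian transition density. -/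
open Complex MeasureTheory

/-!
With `q w = -β₁β₂ e^{-2iwz}`, the denominator of the integrand is `1 - q w`, and
`‖q w‖ = |β₁β₂| < 1` uniformly in `w`. Expanding `1 / (1 - q w)` as a geometric series and
integrating term by term, the factor `q w ^ k` only multiplies the amplitudes by `(-β₁β₂) ^ k` and
lengthens the path `|x - y| + a_j` by `2zk`. Hence every term is a Fourier integral of a Gaussian,
equal to a multiple of the Brownian density at `|x - y| + a_j + 2zk`, from which expanding the
square splits off the density at `|x - y|`.
-/

open ProbabilityTheory
open scoped NNReal

section GeometricExpansion

variable {α 𝕜 : Type*} [MeasurableSpace α] {μ : Measure α} [NormedField 𝕜] {f q : α → 𝕜} {r : ℝ}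

theorem integrable_div_one_sub (hf : Integrable f μ) (hq : AEStronglyMeasurable q μ)
    (hqr : ∀ᵐ x ∂μ, ‖q x‖ ≤ r) (hr : r < 1) : Integrable (fun x ↦ f x / (1 - q x)) μ := by
  have bound : ∀ᵐ x ∂μ, ‖(1 - q x)⁻¹‖ ≤ (1 - r)⁻¹ := by
    filter_upwards [hqr] with x hx
    have norm_lower : 1 - ‖q x‖ ≤ ‖1 - q x‖ := by simpa using norm_sub_norm_le 1 (q x)
    rw [norm_inv]
    exact inv_anti₀ (by linarith) (by linarith)
  simpa only [div_eq_mul_inv] using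
    hf.mul_bdd (g := fun x ↦ (1 - q x)⁻¹) (aestronglyMeasurable_const.sub hq).inv₀ bound

theorem hasSum_integral_mul_pow [NormedSpace ℝ 𝕜] (hf : Integrable f μ)
    (hq : AEStronglyMeasurable q μ) (hqr : ∀ᵐ x ∂μ, ‖q x‖ ≤ r) (hr : r < 1) :
    HasSum (fun k : ℕ ↦ ∫ x, f x * q x ^ k ∂μ) (∫ x, f x / (1 - q x) ∂μ) := by
  have q_lt_one : ∀ᵐ x ∂μ, ‖q x‖ < 1 := hqr.mono fun x hx ↦ hx.trans_lt hr
  have norm_hasSum : ∀ᵐ x ∂μ,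
      HasSum (fun k : ℕ ↦ ‖f x‖ * ‖q x‖ ^ k) (‖f x‖ / (1 - ‖q x‖)) :=
    q_lt_one.mono fun x hx ↦ (hasSum_geometric_of_lt_one (norm_nonneg _) hx).mul_left _
  refine hasSum_integral_of_dominated_convergence (fun k x ↦ ‖f x‖ * ‖q x‖ ^ k)
    (fun k ↦ hf.aestronglyMeasurable.mul (hq.pow k)) (fun k ↦ by simp)
    (norm_hasSum.mono fun x hx ↦ hx.summable)
    ?_ (q_lt_one.mono fun x hx ↦ by
      simpa only [div_eq_mul_inv] using (hasSum_geometric_of_norm_lt_one hx).mul_left (f x))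
  have norm_integrable : Integrable (fun x ↦ ‖f x‖ / (1 - ‖q x‖)) μ :=
    integrable_div_one_sub hf.norm hq.norm (by simpa only [norm_norm] using hqr) hr
  exact norm_integrable.congr (norm_hasSum.mono fun x hx ↦ hx.tsum_eq.symm)

end GeometricExpansion

section Gaussian

theorem integrable_cexp_neg_sq_mul_cexp {t : ℝ} (ht : 0 < t) (s : ℂ) :
    Integrable (fun w : ℝ ↦ cexp (-(w : ℂ) ^ 2 * t / 2) * cexp (-I * w * s)) := by
  have quadratic := integrable_cexp_quadratic (b := (t / 2 : ℂ)) (by simpa using ht) (-I * s) 0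
  refine quadratic.congr (.of_forall fun w ↦ ?_)
  beta_reduce
  rw [← Complex.exp_add]
  ring_nf

theorem integral_cexp_neg_sq_mul_cexp {t : ℝ≥0} (ht : 0 < t) (s : ℝ) :
    ∫ w : ℝ, cexp (-(w : ℂ) ^ 2 * (t : ℝ) / 2) * cexp (-I * w * s) =
      2 * Real.pi * gaussianPDFReal 0 t s := by
  have sqrt_eq : √(Real.pi / (t / 2)) = 2 * Real.pi * (√(2 * Real.pi * t))⁻¹ := by
    rw [show Real.pi / (t / 2) = (2 * Real.pi) ^ 2 / (2 * Real.pi * t) by field_simp,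
      Real.sqrt_div (by positivity), Real.sqrt_sq (by positivity), div_eq_mul_inv]
  have cpow_eq : (Real.pi / ((t : ℝ) / 2) : ℂ) ^ (1 / 2 : ℂ) =
      2 * Real.pi * (√(2 * Real.pi * t))⁻¹ := by
    have rpow_cast := Complex.ofReal_cpow (show 0 ≤ Real.pi / (t / 2) by positivity) (1 / 2)
    rw [← Real.sqrt_eq_rpow, sqrt_eq] at rpow_cast
    push_cast at rpow_cast ⊢
    exact rpow_cast.symm
  calc ∫ w : ℝ, cexp (-(w : ℂ) ^ 2 * (t : ℝ) / 2) * cexp (-I * w * s)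
      = ∫ w : ℝ, cexp (I * (-s) * w) * cexp (-((t : ℝ) / 2) * (w : ℂ) ^ 2) := by
        congr with w
        rw [mul_comm]
        ring_nf
    _ = (Real.pi / ((t : ℝ) / 2) : ℂ) ^ (1 / 2 : ℂ) * cexp (-(-s) ^ 2 / (4 * ((t : ℝ) / 2))) :=
        fourierIntegral_gaussian (by simpa using ht) _
    _ = 2 * Real.pi * gaussianPDFReal 0 t s := by
        rw [cpow_eq, gaussianPDFReal]
        push_cast
        ring_nf

theorem gaussianPDFReal_zero_add (t : ℝ≥0) (u v : ℝ) :
    gaussianPDFReal 0 t (u + v) = (√(2 * Real.pi * t))⁻¹ * Real.exp (-u ^ 2 / (2 * t)) *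
      (Real.exp (-v ^ 2 / (2 * t)) * Real.exp (-u * v / t)) := by
  rw [gaussianPDFReal, mul_assoc (_)⁻¹, ← Real.exp_add, ← Real.exp_add]
  ring_nf

theorem exp_neg_sq_div_mul_exp_neg_mul_div_le {t : ℝ} (ht : 0 ≤ t) (u v : ℝ) :
    Real.exp (-v ^ 2 / (2 * t)) * Real.exp (-u * v / t) ≤ Real.exp (u ^ 2 / (2 * t)) := by
  rw [← Real.exp_add, Real.exp_le_exp]
  calc -v ^ 2 / (2 * t) + -u * v / t = u ^ 2 / (2 * t) - (u + v) ^ 2 / (2 * t) := by ring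
    _ ≤ u ^ 2 / (2 * t) := sub_le_self _ (by positivity)

end Gaussian

section ReflectionExpansion

variable {ι : Type*} [Fintype ι]

/-- The numerator of the spectral representation of a transition density at distance `d`, with
amplitudes `c j` attached to the extra path lengths `a j`. -/
noncomputable def spectralNumerator (c : ι → ℂ) (a : ι → ℝ) (d t w : ℝ) : ℂ :=
  cexp (-(w : ℂ) ^ 2 * t / 2) * cexp (-I * w * d) * ∑ j, c j * cexp (-I * w * a j)

theorem spectralNumerator_def (c : ι → ℂ) (a : ι → ℝ) (d t w : ℝ) :
    spectralNumerator c a d t w =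
      cexp (-(w : ℂ) ^ 2 * t / 2) * cexp (-I * w * d) * ∑ j, c j * cexp (-I * w * a j) := rfl

/-- The factor a round trip between two barriers at distance `z` contributes at frequency `w`,
the product of the two skewness parameters being `b`. -/
noncomputable def roundTripFactor (b : ℂ) (z w : ℝ) : ℂ :=
  -(b * cexp (-2 * I * w * z))

theorem norm_roundTripFactor (b : ℂ) (z w : ℝ) : ‖roundTripFactor b z w‖ = ‖b‖ := by
  rw [roundTripFactor, norm_neg, norm_mul,
    show -2 * I * w * z = ((-2 * w * z : ℝ) : ℂ) * I by push_cast; ring,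
    norm_exp_ofReal_mul_I, mul_one]

theorem continuous_roundTripFactor (b : ℂ) (z : ℝ) : Continuous (roundTripFactor b z) := by
  unfold roundTripFactor
  fun_prop

theorem one_sub_roundTripFactor (b : ℂ) (z w : ℝ) :
    1 - roundTripFactor b z w = b * cexp (-2 * I * w * z) + 1 := by
  rw [roundTripFactor]
  ring

theorem spectralNumerator_mul_roundTripFactor_pow (c : ι → ℂ) (a : ι → ℝ) (b : ℂ) (d z t w : ℝ)
    (k : ℕ) :
    spectralNumerator c a d t w * roundTripFactor b z w ^ k =
      ∑ j, (-b) ^ k * c j *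
        (cexp (-(w : ℂ) ^ 2 * t / 2) * cexp (-I * w * (d + (a j + 2 * z * k) : ℝ))) := by
  rw [spectralNumerator, roundTripFactor, ← neg_mul, mul_pow, ← Complex.exp_nat_mul,
    Finset.mul_sum, Finset.sum_mul]
  refine Finset.sum_congr rfl fun j _ ↦ ?_
  have exp_split : cexp (-I * w * (d + (a j + 2 * z * k) : ℝ)) =
      cexp (-I * w * d) * cexp (-I * w * a j) * cexp (k * (-2 * I * w * z)) := by
    rw [← Complex.exp_add, ← Complex.exp_add]
    push_cast
    ring_nf
  rw [exp_split]
  ring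

theorem integrable_spectralNumerator {t : ℝ} (ht : 0 < t) (c : ι → ℂ) (a : ι → ℝ) (d : ℝ) :
    Integrable (spectralNumerator c a d t) := by
  have eq_sum (w : ℝ) := spectralNumerator_mul_roundTripFactor_pow c a 0 d 0 t w 0
  simp only [pow_zero, mul_one, one_mul] at eq_sum
  rw [funext eq_sum]
  exact integrable_finsetSum _ fun j _ ↦ (integrable_cexp_neg_sq_mul_cexp ht _).const_mul _

theorem integral_spectralNumerator_mul_roundTripFactor_pow {t : ℝ≥0} (ht : 0 < t) (c : ι → ℂ)
    (a : ι → ℝ) (b : ℂ) (d z : ℝ) (k : ℕ) :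
    ∫ w, spectralNumerator c a d t w * roundTripFactor b z w ^ k =
      2 * Real.pi * ((-b) ^ k * ∑ j, c j * gaussianPDFReal 0 t (d + (a j + 2 * z * k))) := by
  simp only [spectralNumerator_mul_roundTripFactor_pow]
  rw [integral_finsetSum _ fun j _ ↦
    (integrable_cexp_neg_sq_mul_cexp (NNReal.coe_pos.mpr ht) _).const_mul _]
  simp only [integral_const_mul, integral_cexp_neg_sq_mul_cexp ht, Finset.mul_sum]
  exact Finset.sum_congr rfl fun j _ ↦ by ring

theorem integrable_spectralNumerator_div_one_sub_roundTripFactor {b : ℂ} (hb : ‖b‖ < 1) {t : ℝ}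
    (ht : 0 < t) (c : ι → ℂ) (a : ι → ℝ) (d z : ℝ) :
    Integrable fun w ↦ spectralNumerator c a d t w / (1 - roundTripFactor b z w) :=
  integrable_div_one_sub (integrable_spectralNumerator ht c a d)
    (continuous_roundTripFactor b z).aestronglyMeasurable
    (.of_forall fun w ↦ (norm_roundTripFactor b z w).le) hb

theorem hasSum_gaussianPDFReal_roundTrip {b : ℂ} (hb : ‖b‖ < 1) {t : ℝ≥0} (ht : 0 < t)
    (c : ι → ℂ) (a : ι → ℝ) (d z : ℝ) :
    HasSum (fun k : ℕ ↦ (-b) ^ k * ∑ j, c j * gaussianPDFReal 0 t (d + (a j + 2 * z * k)))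
      (1 / (2 * Real.pi) *
        ∫ w, spectralNumerator c a d t w / (1 - roundTripFactor b z w)) := by
  have expansion := (hasSum_integral_mul_pow
    (integrable_spectralNumerator (NNReal.coe_pos.mpr ht) c a d)
    (continuous_roundTripFactor b z).aestronglyMeasurable
    (.of_forall fun w ↦ (norm_roundTripFactor b z w).le) hb).mul_left (1 / (2 * Real.pi) : ℂ)
  have two_pi_ne_zero : (2 * Real.pi : ℂ) ≠ 0 := by exact_mod_cast Real.two_pi_pos.ne'
  simpa only [integral_spectralNumerator_mul_roundTripFactor_pow ht, ← mul_assoc,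
    one_div_mul_cancel two_pi_ne_zero, one_mul] using expansion

theorem summable_norm_pow_mul_sum_exp {b : ℂ} (hb : ‖b‖ < 1) {t : ℝ} (ht : 0 ≤ t) (c : ι → ℂ)
    (a : ι → ℝ) (d z : ℝ) :
    Summable fun k : ℕ ↦ ‖(-b) ^ k‖ * ∑ j, ‖c j‖ *
      Real.exp (-(a j + 2 * z * k) ^ 2 / (2 * t)) * Real.exp (-d * (a j + 2 * z * k) / t) := by
  have geometric : Summable fun k : ℕ ↦ ‖b‖ ^ k * ∑ j, ‖c j‖ * Real.exp (d ^ 2 / (2 * t)) :=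
    (summable_geometric_of_lt_one (norm_nonneg b) hb).mul_right _
  refine geometric.of_nonneg_of_le (fun k ↦ by positivity) fun k ↦ ?_
  rw [norm_pow, norm_neg]
  simp only [mul_assoc ‖c _‖]
  gcongr
  exact exp_neg_sq_div_mul_exp_neg_mul_div_le ht _ _

end ReflectionExpansion

theorem transition_density_two_barriers_no_drift_general {ι : Type*} [Fintype ι]
    (c : ι → ℂ) (a : ι → ℝ) {b : ℂ} (hb : ‖b‖ < 1) (d z : ℝ) {t : ℝ} (ht : 0 < t) :
    Integrable (fun w : ℝ ↦
      cexp (-(w : ℂ) ^ 2 * t / 2) * cexp (-I * w * d) * (∑ j, c j * cexp (-I * w * a j)) /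
        (b * cexp (-2 * I * w * z) + 1)) ∧
    Summable (fun k : ℕ ↦ ‖(-b) ^ k‖ * ∑ j, ‖c j‖ *
      Real.exp (-(a j + 2 * z * k) ^ 2 / (2 * t)) * Real.exp (-d * (a j + 2 * z * k) / t)) ∧
    (1 / (2 * Real.pi) : ℂ) * ∫ w : ℝ,
      cexp (-(w : ℂ) ^ 2 * t / 2) * cexp (-I * w * d) * (∑ j, c j * cexp (-I * w * a j)) /
        (b * cexp (-2 * I * w * z) + 1) =
      (√(2 * Real.pi * t))⁻¹ * Real.exp (-d ^ 2 / (2 * t)) * ∑' k : ℕ, (-b) ^ k * ∑ j, c j *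
        Real.exp (-(a j + 2 * z * k) ^ 2 / (2 * t)) * Real.exp (-d * (a j + 2 * z * k) / t) := by
  lift t to ℝ≥0 using ht.le
  simp only [← one_sub_roundTripFactor, ← spectralNumerator_def]
  refine ⟨integrable_spectralNumerator_div_one_sub_roundTripFactor hb ht c a d z,
    summable_norm_pow_mul_sum_exp hb ht.le c a d z, ?_⟩
  rw [← (hasSum_gaussianPDFReal_roundTrip hb (NNReal.coe_pos.mp ht) c a d z).tsum_eq]
  refine (tsum_congr fun k ↦ ?_).trans tsum_mul_left
  simp only [gaussianPDFReal_zero_add, Finset.mul_sum]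
  refine Finset.sum_congr rfl fun j _ ↦ ?_
  push_cast
  ring

/-- the transition density of the (β1,β2)-SBM without drift: the contour
integral representation equals the Gaussian series expansion, with absolute convergence
of both the integral and the double series. -/
theorem transition_density_two_barriers_no_drift
    (z1 z2 : ℝ) (hz : z1 < z2) (β1 β2 : ℝ)
    (hβ1 : β1 ∈ Set.Ioo (-1 : ℝ) 1) (hβ2 : β2 ∈ Set.Ioo (-1 : ℝ) 1)
    (t : ℝ) (ht : 0 < t) (x y : ℝ) :
    Integrable (fun w : ℝ =>
        Complex.exp (-(w : ℂ) ^ 2 * t / 2) * Complex.exp (-Complex.I * w * |x - y|) *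
          (∑ j : Fin 4, (cSBM z1 z2 β1 β2 y j : ℂ) *
            Complex.exp (-Complex.I * w * (aSBM z1 z2 x y j))) /
          ((β1 * β2 : ℂ) * Complex.exp (-2 * Complex.I * w * (z2 - z1)) + 1)) ∧
    Summable (fun k : ℕ => |(-(β1 * β2)) ^ k| *
        ∑ j : Fin 4, |cSBM z1 z2 β1 β2 y j| *
          Real.exp (-(aSBM z1 z2 x y j + 2 * (z2 - z1) * k) ^ 2 / (2 * t)) *
          Real.exp (-|x - y| * (aSBM z1 z2 x y j + 2 * (z2 - z1) * k) / t)) ∧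
    (1 / (2 * Real.pi) : ℂ) *
        (∫ w : ℝ,
          Complex.exp (-(w : ℂ) ^ 2 * t / 2) * Complex.exp (-Complex.I * w * |x - y|) *
            (∑ j : Fin 4, (cSBM z1 z2 β1 β2 y j : ℂ) *
              Complex.exp (-Complex.I * w * (aSBM z1 z2 x y j))) /
            ((β1 * β2 : ℂ) * Complex.exp (-2 * Complex.I * w * (z2 - z1)) + 1)) =
      (((Real.sqrt (2 * Real.pi * t))⁻¹ * Real.exp (-(x - y) ^ 2 / (2 * t)) *
        ∑' k : ℕ, (-(β1 * β2)) ^ k *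
          ∑ j : Fin 4, cSBM z1 z2 β1 β2 y j *
            Real.exp (-(aSBM z1 z2 x y j + 2 * (z2 - z1) * k) ^ 2 / (2 * t)) *
            Real.exp (-|x - y| * (aSBM z1 z2 x y j + 2 * (z2 - z1) * k) / t) : ℝ) : ℂ) := by
  have hb : ‖(β1 * β2 : ℂ)‖ < 1 := by
    simpa using mul_lt_one_of_nonneg_of_lt_one_left (abs_nonneg _) (abs_lt.mpr hβ1)
      (abs_lt.mpr hβ2).le
  simpa [Complex.ofReal_tsum] using transition_density_two_barriers_no_drift_general
    (fun j ↦ (cSBM z1 z2 β1 β2 y j : ℂ)) (aSBM z1 z2 x y) hb |x - y| (z2 - z1) ht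
end

section
/- For every t > 0, all x, y ∈ ℝ, and every N ∈ ℕ, the tail R^N v^{(β1,β2)}(t,x,y) = Σ_{k=N+1}^∞ (−β1β2)^k Σ_{j=1}^4 c_j(y) exp(−(a_j(x,y)+2zk)²/(2t)) exp(−|x−y|(a_j(x,y)+2zk)/t) of the series v^{(β1,β2)} satisfies the uniform bound |R^N v^{(β1,β2)}(t,x,y)| ≤ v̄ |β1β2|^{N+1}, where v̄ = (1+|β1|)(1+|β2|)/(1−|β1β2|). -/
open Complex MeasureTheory

/-! All exponents are nonpositive because `a_j ≥ 0`, so the exponential factors are at most `1`.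
The absolute values of the four coefficients are `1, |β1|, |β2|, |β1 * β2|`, the terms of the
expanded product `(1 + |β1|) * (1 + |β2|)`. Hence the tail is dominated by a geometric series. -/

lemma norm_tsum_pow_add_mul_le {R : Type*} [SeminormedRing R] [NormOneClass R] {q : R}
    (hq : ‖q‖ < 1) {f : ℕ → R} {C : ℝ} (hf : ∀ k, ‖f k‖ ≤ C) (n : ℕ) :
    ‖∑' k, q ^ (n + k) * f k‖ ≤ C / (1 - ‖q‖) * ‖q‖ ^ n := by
  have geometric : HasSum (fun k ↦ ‖q‖ ^ n * C * ‖q‖ ^ k) (‖q‖ ^ n * C * (1 - ‖q‖)⁻¹) :=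
    (hasSum_geometric_of_lt_one (norm_nonneg q) hq).mul_left _
  have dominated (k : ℕ) : ‖q ^ (n + k) * f k‖ ≤ ‖q‖ ^ n * C * ‖q‖ ^ k :=
    calc
      ‖q ^ (n + k) * f k‖ ≤ ‖q ^ (n + k)‖ * ‖f k‖ := norm_mul_le _ _
      _ ≤ ‖q‖ ^ (n + k) * C := by gcongr; exacts [norm_pow_le _ _, hf k]
      _ = ‖q‖ ^ n * C * ‖q‖ ^ k := by ring
  calc
    ‖∑' k, q ^ (n + k) * f k‖ ≤ ‖q‖ ^ n * C * (1 - ‖q‖)⁻¹ :=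
      tsum_of_norm_bounded geometric dominated
    _ = C / (1 - ‖q‖) * ‖q‖ ^ n := by ring

/-- The ratio `p t (d + a) / p t d` of values of the centred Gaussian density `p t` of variance `t`,
with the square in the exponent expanded as in the series `v`. -/
noncomputable def gaussianRatio (t d a : ℝ) : ℝ :=
  Real.exp (-a ^ 2 / (2 * t)) * Real.exp (-d * a / t)

lemma gaussianRatio_nonneg (t d a : ℝ) : 0 ≤ gaussianRatio t d a := by
  unfold gaussianRatio
  positivity

lemma gaussianRatio_le_one {t d a : ℝ} (ht : 0 ≤ t) (hd : 0 ≤ d) (ha : 0 ≤ a) :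
    gaussianRatio t d a ≤ 1 := by
  rw [gaussianRatio, ← Real.exp_add, Real.exp_le_one_iff, neg_div, neg_mul, neg_div, ← neg_add,
    neg_nonpos]
  positivity

lemma aSBM_nonneg (z1 z2 x y : ℝ) (j : Fin 4) : 0 ≤ aSBM z1 z2 x y j := by
  have detour (z : ℝ) : 0 ≤ |y - z| + |x - z| - |y - x| := by
    rw [abs_sub_comm x z]
    exact sub_nonneg.2 (abs_sub_le y z x)
  have overlap : 0 ≤ 2 * max (z2 - max x (max y z1)) 0 + 2 * max (min x (min y z2) - z1) 0 := by
    positivity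
  fin_cases j
  exacts [le_rfl, detour z1, detour z2, overlap]

lemma abs_two_mul_ite_sub_one (p : Prop) [Decidable p] :
    |2 * (if p then (1 : ℝ) else 0) - 1| = 1 := by
  split_ifs <;> norm_num

lemma sum_abs_cSBM (z1 z2 β1 β2 y : ℝ) :
    ∑ j, |cSBM z1 z2 β1 β2 y j| = (1 + |β1|) * (1 + |β2|) :=
  calc
    ∑ j, |cSBM z1 z2 β1 β2 y j| = 1 + |β1| + |β2| + |β1| * |β2| := by
      simp only [cSBM, Fin.sum_univ_four, Matrix.cons_val, abs_mul, abs_one,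
        abs_two_mul_ite_sub_one, abs_sub_comm (1 : ℝ), one_mul]
    _ = (1 + |β1|) * (1 + |β2|) := by ring

/-- The sum over `j` in the series `v`, as a function of the shift `s = 2 * (z2 - z1) * k` of the
exponents `a_j`. -/
noncomputable def shiftedSumSBM (z1 z2 β1 β2 t x y s : ℝ) : ℝ :=
  ∑ j, cSBM z1 z2 β1 β2 y j * gaussianRatio t |x - y| (aSBM z1 z2 x y j + s)

lemma abs_shiftedSumSBM_le (z1 z2 β1 β2 : ℝ) {t : ℝ} (ht : 0 ≤ t) (x y : ℝ) {s : ℝ}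
    (hs : 0 ≤ s) : |shiftedSumSBM z1 z2 β1 β2 t x y s| ≤ (1 + |β1|) * (1 + |β2|) := by
  rw [← sum_abs_cSBM z1 z2 β1 β2 y]
  refine (Finset.abs_sum_le_sum_abs _ _).trans (Finset.sum_le_sum fun j _ ↦ ?_)
  rw [abs_mul, abs_of_nonneg (gaussianRatio_nonneg ..)]
  have shifted_nonneg : 0 ≤ aSBM z1 z2 x y j + s := add_nonneg (aSBM_nonneg ..) hs
  exact mul_le_of_le_one_right (abs_nonneg _)
    (gaussianRatio_le_one ht (abs_nonneg _) shifted_nonneg)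

theorem series_v_tail_bound_general
    (z1 z2 : ℝ) (hz : z1 ≤ z2) (β1 β2 : ℝ)
    (hβ : |β1 * β2| < 1)
    (t : ℝ) (ht : 0 < t) (x y : ℝ) (N : ℕ) :
    |∑' k : ℕ, (-(β1 * β2)) ^ (N + 1 + k) *
        ∑ j : Fin 4, cSBM z1 z2 β1 β2 y j *
          Real.exp (-(aSBM z1 z2 x y j + 2 * (z2 - z1) * (N + 1 + k)) ^ 2 / (2 * t)) *
          Real.exp (-|x - y| * (aSBM z1 z2 x y j + 2 * (z2 - z1) * (N + 1 + k)) / t)| ≤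
      (1 + |β1|) * (1 + |β2|) / (1 - |β1 * β2|) * |β1 * β2| ^ (N + 1) := by
  have shift_nonneg (k : ℕ) : 0 ≤ 2 * (z2 - z1) * ((N : ℝ) + 1 + k) :=
    mul_nonneg (mul_nonneg zero_le_two (sub_nonneg.2 hz)) (by positivity)
  have ratio_lt_one : ‖-(β1 * β2)‖ < 1 := by rwa [norm_neg, Real.norm_eq_abs]
  have tail_le := norm_tsum_pow_add_mul_le ratio_lt_one
    (fun k ↦ abs_shiftedSumSBM_le z1 z2 β1 β2 ht.le x y (shift_nonneg k)) (N + 1)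
  simpa only [shiftedSumSBM, gaussianRatio, ← mul_assoc, norm_neg, Real.norm_eq_abs] using tail_le

/-- the tail of the series v^{(β1,β2)}(t,x,y) truncated at the first N+1
terms is bounded, uniformly in x and y, by v̄ |β1 β2|^{N+1}. -/
theorem series_v_tail_bound
    (z1 z2 : ℝ) (hz : z1 < z2) (β1 β2 : ℝ)
    (hβ1 : β1 ∈ Set.Ioo (-1 : ℝ) 1) (hβ2 : β2 ∈ Set.Ioo (-1 : ℝ) 1)
    (t : ℝ) (ht : 0 < t) (x y : ℝ) (N : ℕ) :
    |∑' k : ℕ, (-(β1 * β2)) ^ (N + 1 + k) *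
        ∑ j : Fin 4, cSBM z1 z2 β1 β2 y j *
          Real.exp (-(aSBM z1 z2 x y j + 2 * (z2 - z1) * (N + 1 + k)) ^ 2 / (2 * t)) *
          Real.exp (-|x - y| * (aSBM z1 z2 x y j + 2 * (z2 - z1) * (N + 1 + k)) / t)| ≤
      (1 + |β1|) * (1 + |β2|) / (1 - |β1 * β2|) * |β1 * β2| ^ (N + 1) := by
  have abs_mul_lt_one : |β1 * β2| < 1 :=
    abs_mul β1 β2 ▸ mul_lt_one_of_nonneg_of_lt_one_left (abs_nonneg _) (abs_lt.2 hβ1)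
      (abs_lt.2 hβ2).le
  exact series_v_tail_bound_general z1 z2 hz.le β1 β2 abs_mul_lt_one t ht x y N
end

section
/- Let A ∈ ℝ, A ≠ 0, and t > 0. Then for every ω ∈ ℝ the convolution of w ↦ e^{Aw} 1_{ℝ⁻}(Aw) with the Gaussian w ↦ e^{−w²/(2t)} satisfies ∫_ℝ e^{As} 1_{ℝ⁻}(As) e^{−(ω−s)²/(2t)} ds = √t · e^{A²t/2 + Aω} · √(2π) · ( 1_{ℝ⁻}(A) + sgn(A) · Φ^c(ω/√t + A√t) ), where sgn(A) = 2·1_{ℝ⁺}(A) − 1. -/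
/-!
Completing the square turns `A * s - (ω - s) ^ 2 / (2 * t)` into a constant minus half the square
of `u = (ω + A * t - s) / √t`. As this substitution reverses orientation, the half-line `s < 0`
becomes the upper Gaussian tail `u > ω / √t + A * √t`, and `0 < s` the complementary lower one.
The sign of `A` decides which of the two half-lines is the support of the truncated exponential.
-/

open MeasureTheory

/-- The Gaussian tail function Φᶜ(y) = (2π)^{-1/2} ∫_y^∞ e^{-u²/2} du. -/
noncomputable def gaussTail (y : ℝ) : ℝ :=
  (Real.sqrt (2 * Real.pi))⁻¹ * ∫ u in Set.Ioi y, Real.exp (-u ^ 2 / 2)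

open Real Set

theorem integral_mul_ite_mul_eq_setIntegral {α R : Type*} [MeasurableSpace α] [NormedRing R]
    [NormedSpace ℝ R] (μ : Measure α) (f g : α → R) (p : α → Prop) [DecidablePred p]
    (hp : MeasurableSet {x | p x}) :
    ∫ x, f x * (if p x then 1 else 0) * g x ∂μ = ∫ x in {x | p x}, f x * g x ∂μ := by
  rw [← integral_indicator hp]
  congr with x
  by_cases hx : p x <;> simp [hx]

theorem setIntegral_comp_const_sub_div {E : Type*} [NormedAddCommGroup E] [NormedSpace ℝ E]
    (f : ℝ → E) {S : Set ℝ} (hS : MeasurableSet S) (b : ℝ) {r : ℝ} (hr : r ≠ 0) :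
    ∫ s in S, f ((b - s) / r) = |r| • ∫ u in (fun u ↦ b - r * u) ⁻¹' S, f u := by
  set T := (fun u ↦ b - r * u) ⁻¹' S
  have hT : MeasurableSet T := hS.preimage (by fun_prop)
  have h_indicator (s : ℝ) : S.indicator (fun s ↦ f ((b - s) / r)) s =
      T.indicator f ((b - s) / r) := by
    classical
    simp only [T, indicator_apply, mem_preimage, mul_div_cancel₀ _ hr, sub_sub_cancel]
  calc ∫ s in S, f ((b - s) / r)
      = ∫ s, T.indicator f ((b - s) / r) := by
        simp only [← integral_indicator hS, h_indicator]
    _ = ∫ s, T.indicator f (s / r) :=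
        integral_sub_left_eq_self (fun s ↦ T.indicator f (s / r)) volume b
    _ = |r| • ∫ u in T, f u := by rw [Measure.integral_comp_div, integral_indicator hT]

theorem preimage_const_sub_mul_Iio {K : Type*} [Field K] [LinearOrder K] [IsStrictOrderedRing K]
    (a b : K) {r : K} (hr : 0 < r) : (fun u ↦ b - r * u) ⁻¹' Iio a = Ioi ((b - a) / r) := by
  ext u
  rw [mem_preimage, mem_Iio, mem_Ioi, div_lt_iff₀' hr, sub_lt_comm]

theorem preimage_const_sub_mul_Ioi {K : Type*} [Field K] [LinearOrder K] [IsStrictOrderedRing K]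
    (a b : K) {r : K} (hr : 0 < r) : (fun u ↦ b - r * u) ⁻¹' Ioi a = Iio ((b - a) / r) := by
  ext u
  rw [mem_preimage, mem_Ioi, mem_Iio, lt_div_iff₀' hr, lt_sub_comm]

theorem integrable_exp_neg_sq_div_two : Integrable fun u : ℝ ↦ exp (-u ^ 2 / 2) := by
  simpa [neg_div, div_eq_inv_mul] using integrable_exp_neg_mul_sq (b := 2⁻¹) (by norm_num)

theorem integral_exp_neg_sq_div_two : ∫ u : ℝ, exp (-u ^ 2 / 2) = √(2 * π) := by
  simpa [neg_div, div_eq_inv_mul] using integral_gaussian 2⁻¹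

theorem integral_Ioi_exp_neg_sq_div_two (y : ℝ) :
    ∫ u in Ioi y, exp (-u ^ 2 / 2) = √(2 * π) * gaussTail y := by
  rw [gaussTail, mul_inv_cancel_left₀ (by positivity)]

theorem integral_Iio_exp_neg_sq_div_two (y : ℝ) :
    ∫ u in Iio y, exp (-u ^ 2 / 2) = √(2 * π) * (1 - gaussTail y) := by
  have h_split : (∫ u in Iio y, exp (-u ^ 2 / 2)) + ∫ u in Ioi y, exp (-u ^ 2 / 2) =
      √(2 * π) := by
    rw [← integral_Iic_eq_integral_Iio, ← integral_exp_neg_sq_div_two, ← compl_Iic]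
    exact integral_add_compl measurableSet_Iic integrable_exp_neg_sq_div_two
  rw [integral_Ioi_exp_neg_sq_div_two] at h_split
  linear_combination h_split

theorem add_mul_sub_div_sqrt (x A t a : ℝ) :
    (x + A * t - a) / √t = (x - a) / √t + A * √t := by
  rw [add_sub_right_comm, add_div, mul_div_assoc, div_sqrt]

section ExponentialTilt

variable (A : ℝ) {t : ℝ} (ht : 0 < t) (ω : ℝ)

include ht

theorem exp_mul_mul_exp_neg_sub_sq_div (s : ℝ) :
    exp (A * s) * exp (-(ω - s) ^ 2 / (2 * t)) =
      exp (A ^ 2 * t / 2 + A * ω) * exp (-((ω + A * t - s) / √t) ^ 2 / 2) := by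
  rw [← exp_add, ← exp_add, div_pow, sq_sqrt ht.le]
  congr 1
  field_simp
  ring

theorem setIntegral_exp_mul_mul_exp_neg_sub_sq_div {S : Set ℝ} (hS : MeasurableSet S) :
    ∫ s in S, exp (A * s) * exp (-(ω - s) ^ 2 / (2 * t)) =
      √t * exp (A ^ 2 * t / 2 + A * ω) *
        ∫ u in (fun u ↦ ω + A * t - √t * u) ⁻¹' S, exp (-u ^ 2 / 2) := by
  simp only [exp_mul_mul_exp_neg_sub_sq_div A ht ω]
  rw [integral_const_mul,
    setIntegral_comp_const_sub_div (fun u ↦ exp (-u ^ 2 / 2)) hS _ (sqrt_pos.2 ht).ne',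
    abs_of_nonneg (sqrt_nonneg t), smul_eq_mul]
  ring

theorem integral_Iio_exp_mul_mul_exp_neg_sub_sq_div (a : ℝ) :
    ∫ s in Iio a, exp (A * s) * exp (-(ω - s) ^ 2 / (2 * t)) =
      √t * exp (A ^ 2 * t / 2 + A * ω) * √(2 * π) * gaussTail ((ω - a) / √t + A * √t) := by
  rw [setIntegral_exp_mul_mul_exp_neg_sub_sq_div A ht ω measurableSet_Iio,
    preimage_const_sub_mul_Iio _ _ (sqrt_pos.2 ht), integral_Ioi_exp_neg_sq_div_two,
    add_mul_sub_div_sqrt, mul_assoc _ √(2 * π)]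

theorem integral_Ioi_exp_mul_mul_exp_neg_sub_sq_div (a : ℝ) :
    ∫ s in Ioi a, exp (A * s) * exp (-(ω - s) ^ 2 / (2 * t)) =
      √t * exp (A ^ 2 * t / 2 + A * ω) * √(2 * π) *
        (1 - gaussTail ((ω - a) / √t + A * √t)) := by
  rw [setIntegral_exp_mul_mul_exp_neg_sub_sq_div A ht ω measurableSet_Ioi,
    preimage_const_sub_mul_Ioi _ _ (sqrt_pos.2 ht), integral_Iio_exp_neg_sq_div_two,
    add_mul_sub_div_sqrt, mul_assoc _ √(2 * π)]

end ExponentialTilt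

/-- convolution of the truncated exponential with a Gaussian. -/
theorem convolution_truncated_exp_gaussian
    (A : ℝ) (hA : A ≠ 0) (t : ℝ) (ht : 0 < t) (ω : ℝ) :
    (∫ s : ℝ, Real.exp (A * s) * (if A * s < 0 then (1 : ℝ) else 0) *
        Real.exp (-(ω - s) ^ 2 / (2 * t))) =
      Real.sqrt t * Real.exp (A ^ 2 * t / 2 + A * ω) * Real.sqrt (2 * Real.pi) *
        ((if A < 0 then (1 : ℝ) else 0) +
          (2 * (if 0 < A then (1 : ℝ) else 0) - 1) *
            gaussTail (ω / Real.sqrt t + A * Real.sqrt t)) := by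
  rw [integral_mul_ite_mul_eq_setIntegral volume (fun s ↦ exp (A * s)) _ (fun s ↦ A * s < 0)
    (measurableSet_lt (by fun_prop) measurable_const)]
  rcases hA.lt_or_gt with hA_neg | hA_pos
  · have h_support : {s | A * s < 0} = Ioi 0 :=
      (preimage_const_mul_Iio_of_neg 0 hA_neg).trans (by rw [zero_div])
    rw [h_support, integral_Ioi_exp_mul_mul_exp_neg_sub_sq_div A ht, if_pos hA_neg,
      if_neg hA_neg.not_gt, sub_zero]
    ring
  · have h_support : {s | A * s < 0} = Iio 0 :=
      (preimage_const_mul_Iio₀ 0 hA_pos).trans (by rw [zero_div])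
    rw [h_support, integral_Iio_exp_mul_mul_exp_neg_sub_sq_div A ht, if_neg hA_pos.not_gt,
      if_pos hA_pos, sub_zero]
    ring
end

section
/- Fix a barrier z1 ∈ ℝ, β ∈ (−1,1)∖{0}, μ ∈ ℝ∖{0}, t > 0, and y ∈ ℝ. Set s = 2·1_{[z1,∞)}(y) − 1 and c₂(μ,y; iw) = βs·iw − βμ. Then the function w ↦ e^{−w²t/2} c₂(μ,y; iw)/(iw + βμ) is integrable on ℝ and its Fourier transform equals, for every ω ∈ ℝ: F( e^{−w²t/2} c₂(μ,y;iw)/(iw+βμ) )(ω) = (βs/√t) e^{−ω²/(2t)} − (|βμ|/√t)(1 + βs) · ( e^{Aw} 1_{ℝ⁻}(Aw) ∗ e^{−w²/(2t)} )(ω) with A = βμ, where ∗ denotes convolution on ℝ. -/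
open Complex MeasureTheory

/-!
With `A = βμ` and `b = βs`, `(b·iw - A) / (iw + A) = b - (1 + b)·A / (iw + A)`, and `A / (iw + A)` is
`|A|` times the integral of `u ↦ e^{Au} 1_{ℝ⁻}(Au)` against `e^{iwu}`. Hence multiplying a function
by this quotient subtracts, on the Fourier side, a convolution with that one-sided exponential; the
Gaussian enters only through its own Fourier transform.
-/

/-- The Fourier transform on `ℝ` in the unitary angular-frequency normalization,
`F(f)(ω) = (2π)^{-1/2} ∫ f(w) e^{-iωw} dw`, as opposed to Mathlib's `𝓕`, which has `2π` in the
exponent. -/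
noncomputable def unitaryFourier (f : ℝ → ℂ) (ω : ℝ) : ℂ :=
  ((Real.sqrt (2 * Real.pi) : ℂ))⁻¹ * ∫ w : ℝ, f w * cexp (-I * ω * w)

/-- The one-sided exponential `e^{Au} 1_{ℝ⁻}(Au)`: it lives on the half-line where it decays,
whatever the sign of `A`. -/
noncomputable def expKernel (A u : ℝ) : ℝ :=
  Real.exp (A * u) * (if A * u < 0 then (1 : ℝ) else 0)

section UnitaryFourier

variable {f g : ℝ → ℂ}

lemma sqrt_two_pi_ne_zero : (Real.sqrt (2 * Real.pi) : ℂ) ≠ 0 := by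
  exact_mod_cast (Real.sqrt_pos.2 Real.two_pi_pos).ne'

lemma unitaryFourier_eq_vectorFourier (f : ℝ → ℂ) (ω : ℝ) :
    unitaryFourier f ω = ((Real.sqrt (2 * Real.pi) : ℂ))⁻¹ *
      VectorFourier.fourierIntegral Real.probChar volume (LinearMap.mul ℝ ℝ) f ω := by
  rw [unitaryFourier, VectorFourier.fourierIntegral_probChar]
  congr 2 with w
  rw [LinearMap.mul_apply', smul_eq_mul, mul_comm]
  push_cast
  ring_nf

lemma integrable_mul_cexp_neg_I_mul (hf : Integrable f) (ω : ℝ) :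
    Integrable (fun w : ℝ => f w * cexp (-I * ω * w)) := by
  refine hf.mul_bdd (c := 1) (by fun_prop) (.of_forall fun w => ?_)
  have hphase : -I * (ω : ℂ) * w = ((-ω * w : ℝ) : ℂ) * I := by push_cast; ring
  rw [hphase, norm_exp_ofReal_mul_I]

lemma unitaryFourier_sub (hf : Integrable f) (hg : Integrable g) (ω : ℝ) :
    unitaryFourier (fun w => f w - g w) ω = unitaryFourier f ω - unitaryFourier g ω := by
  simp only [unitaryFourier, sub_mul]
  rw [integral_sub (integrable_mul_cexp_neg_I_mul hf ω) (integrable_mul_cexp_neg_I_mul hg ω),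
    mul_sub]

lemma unitaryFourier_const_mul (c : ℂ) (f : ℝ → ℂ) (ω : ℝ) :
    unitaryFourier (fun w => c * f w) ω = c * unitaryFourier f ω := by
  simp only [unitaryFourier, mul_assoc, integral_const_mul]
  ring

lemma continuous_unitaryFourier (hf : Integrable f) : Continuous (unitaryFourier f) := by
  rw [funext (unitaryFourier_eq_vectorFourier f)]
  exact continuous_const.mul
    (VectorFourier.fourierIntegral_continuous Real.continuous_probChar continuous_mul hf)

lemma norm_unitaryFourier_le (f : ℝ → ℂ) (ω : ℝ) :
    ‖unitaryFourier f ω‖ ≤ ‖((Real.sqrt (2 * Real.pi) : ℂ))⁻¹‖ * ∫ w, ‖f w‖ := by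
  rw [unitaryFourier_eq_vectorFourier, norm_mul]
  gcongr
  exact VectorFourier.norm_fourierIntegral_le_integral_norm ..

lemma integral_unitaryFourier_mul_eq (hf : Integrable f) (hg : Integrable g) :
    ∫ w, unitaryFourier f w * g w = ∫ w, f w * unitaryFourier g w := by
  have hflip : (LinearMap.mul ℝ ℝ).flip = LinearMap.mul ℝ ℝ := by
    ext; simp
  simp only [unitaryFourier_eq_vectorFourier, mul_assoc, mul_left_comm (f _), integral_const_mul]
  congr 1
  simpa only [hflip, smul_eq_mul] using VectorFourier.integral_fourierIntegral_smul_eq_flip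
    (L := LinearMap.mul ℝ ℝ) Real.continuous_probChar continuous_mul hf hg

lemma unitaryFourier_comp_neg_mul_cexp (g : ℝ → ℂ) (ω u : ℝ) :
    unitaryFourier (fun w => g (-w) * cexp (-I * ω * (-w : ℝ))) u = unitaryFourier g (ω - u) := by
  rw [unitaryFourier, unitaryFourier, ← integral_neg_eq_self]
  congr 2 with w
  rw [neg_neg, mul_assoc, ← Complex.exp_add]
  push_cast
  ring_nf

lemma integrable_unitaryFourier_comp_neg_mul (hf : Integrable f) (hg : Integrable g) :
    Integrable (fun w => unitaryFourier f (-w) * g w) :=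
  hg.bdd_mul ((continuous_unitaryFourier hf).comp continuous_neg).aestronglyMeasurable
    (.of_forall fun w => norm_unitaryFourier_le f (-w))

/- The reflection `w ↦ -w` turns the left-hand side into `∫ F(f) h`, where `F(h)(u) = F(g)(ω - u)`,
and the multiplication formula moves the transform from `f` to `h`. -/
lemma unitaryFourier_unitaryFourier_comp_neg_mul (hf : Integrable f) (hg : Integrable g) (ω : ℝ) :
    unitaryFourier (fun w => unitaryFourier f (-w) * g w) ω =
      ((Real.sqrt (2 * Real.pi) : ℂ))⁻¹ * ∫ u, f u * unitaryFourier g (ω - u) := by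
  have hint : Integrable (fun w => g (-w) * cexp (-I * ω * (-w : ℝ))) :=
    (integrable_mul_cexp_neg_I_mul hg ω).comp_neg
  simp only [← unitaryFourier_comp_neg_mul_cexp g ω]
  rw [← integral_unitaryFourier_mul_eq hf hint, unitaryFourier, ← integral_neg_eq_self]
  simp only [neg_neg, mul_assoc]

end UnitaryFourier

section HalfLineExponential

variable {R : Type*} [Ring R] [LinearOrder R] [IsStrictOrderedRing R] {a : R}

lemma setOf_mul_neg_of_pos (ha : 0 < a) : {u : R | a * u < 0} = Set.Iio 0 := by
  ext u
  exact smul_neg_iff_of_pos_left (β := R) ha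

lemma setOf_mul_neg_of_neg (ha : a < 0) : {u : R | a * u < 0} = Set.Ioi 0 := by
  ext u
  exact smul_neg_iff_of_neg_left (β := R) ha

variable {z : ℂ}

lemma integrableOn_cexp_mul_setOf_re_mul_neg (hz : z.re ≠ 0) :
    IntegrableOn (fun u : ℝ => cexp (z * u)) {u : ℝ | z.re * u < 0} := by
  rcases hz.lt_or_gt with hneg | hpos
  · rw [setOf_mul_neg_of_neg hneg]
    exact integrableOn_exp_mul_complex_Ioi hneg 0
  · rw [setOf_mul_neg_of_pos hpos]
    exact (integrableOn_exp_mul_complex_Iic hpos 0).mono_set Set.Iio_subset_Iic_self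

lemma abs_re_mul_integral_cexp_mul_setOf_re_mul_neg (hz : z.re ≠ 0) :
    ((|z.re| : ℝ) : ℂ) * ∫ u : ℝ in {u : ℝ | z.re * u < 0}, cexp (z * u) = z.re / z := by
  rcases hz.lt_or_gt with hneg | hpos
  · rw [setOf_mul_neg_of_neg hneg, integral_exp_mul_complex_Ioi hneg, abs_of_neg hneg]
    simp only [ofReal_zero, mul_zero, Complex.exp_zero, ofReal_neg]
    ring
  · rw [setOf_mul_neg_of_pos hpos, ← integral_Iic_eq_integral_Iio,
      integral_exp_mul_complex_Iic hpos, abs_of_pos hpos]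
    simp only [ofReal_zero, mul_zero, Complex.exp_zero]
    ring

end HalfLineExponential

section ExpKernel

variable {A : ℝ}

lemma expKernel_mul_cexp (A ω : ℝ) :
    (fun u : ℝ => (expKernel A u : ℂ) * cexp (-I * ω * u)) =
      {u : ℝ | A * u < 0}.indicator (fun u => cexp ((A - I * ω) * u)) := by
  ext u
  by_cases hu : A * u < 0
  · rw [Set.indicator_of_mem (by exact hu), expKernel, if_pos hu, mul_one, ofReal_exp,
      ← Complex.exp_add]
    push_cast
    ring_nf
  · rw [Set.indicator_of_notMem (by exact hu), expKernel, if_neg hu, mul_zero, ofReal_zero,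
      zero_mul]

lemma measurableSet_setOf_mul_neg (A : ℝ) : MeasurableSet {u : ℝ | A * u < 0} :=
  measurableSet_lt (by fun_prop) measurable_const

lemma integrable_expKernel (hA : A ≠ 0) : Integrable (fun u => (expKernel A u : ℂ)) := by
  have hker := expKernel_mul_cexp A 0
  simp only [ofReal_zero, mul_zero, zero_mul, Complex.exp_zero, mul_one, sub_zero] at hker
  rw [hker, integrable_indicator_iff (measurableSet_setOf_mul_neg A)]
  exact integrableOn_cexp_mul_setOf_re_mul_neg (z := A) hA

lemma abs_mul_unitaryFourier_expKernel (hA : A ≠ 0) (ω : ℝ) :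
    ((|A| : ℝ) : ℂ) * unitaryFourier (fun u => (expKernel A u : ℂ)) ω =
      ((Real.sqrt (2 * Real.pi) : ℂ))⁻¹ * (A / (A - I * ω)) := by
  have hre : ((A : ℂ) - I * ω).re = A := by simp
  have hint := abs_re_mul_integral_cexp_mul_setOf_re_mul_neg (z := A - I * ω) (by rwa [hre])
  rw [hre] at hint
  rw [unitaryFourier, expKernel_mul_cexp, integral_indicator (measurableSet_setOf_mul_neg A),
    mul_left_comm, hint]

end ExpKernel

section AffineQuotient

variable {A : ℝ} {g : ℝ → ℂ}

lemma I_mul_ofReal_add_ofReal_ne_zero (hA : A ≠ 0) (w : ℝ) : I * (w : ℂ) + A ≠ 0 := by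
  intro h
  exact hA (by simpa using congrArg re h)

lemma mul_affine_div_eq (hA : A ≠ 0) (b : ℂ) (g : ℝ → ℂ) (w : ℝ) :
    g w * (b * (I * w) - A) / (I * w + A) =
      b * g w - (1 + b) * (|A| : ℝ) * Real.sqrt (2 * Real.pi) *
        (unitaryFourier (fun u => (expKernel A u : ℂ)) (-w) * g w) := by
  have hden := I_mul_ofReal_add_ofReal_ne_zero hA w
  have hker : ((|A| : ℝ) : ℂ) * Real.sqrt (2 * Real.pi) *
      unitaryFourier (fun u => (expKernel A u : ℂ)) (-w) = A / (I * w + A) := by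
    rw [mul_right_comm, abs_mul_unitaryFourier_expKernel hA, mul_right_comm,
      inv_mul_cancel₀ sqrt_two_pi_ne_zero, one_mul, ofReal_neg, mul_neg, sub_neg_eq_add, add_comm]
  calc g w * (b * (I * w) - A) / (I * w + A)
      = b * g w - (1 + b) * (A / (I * w + A)) * g w := by field_simp; ring
    _ = _ := by rw [← hker]; ring

lemma integrable_mul_affine_div (hA : A ≠ 0) (b : ℂ) (hg : Integrable g) :
    Integrable (fun w : ℝ => g w * (b * (I * w) - A) / (I * w + A)) := by
  simp only [mul_affine_div_eq hA]
  exact (hg.const_mul _).sub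
    ((integrable_unitaryFourier_comp_neg_mul (integrable_expKernel hA) hg).const_mul _)

lemma unitaryFourier_mul_affine_div (hA : A ≠ 0) (b : ℂ) (hg : Integrable g) (ω : ℝ) :
    unitaryFourier (fun w => g w * (b * (I * w) - A) / (I * w + A)) ω =
      b * unitaryFourier g ω -
        (|A| : ℝ) * (1 + b) * ∫ u, (expKernel A u : ℂ) * unitaryFourier g (ω - u) := by
  have hker := integrable_expKernel hA
  simp only [mul_affine_div_eq hA]
  rw [unitaryFourier_sub (hg.const_mul _)
      ((integrable_unitaryFourier_comp_neg_mul hker hg).const_mul _),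
    unitaryFourier_const_mul, unitaryFourier_const_mul,
    unitaryFourier_unitaryFourier_comp_neg_mul hker hg, mul_assoc _ (Real.sqrt _ : ℂ),
    mul_inv_cancel_left₀ sqrt_two_pi_ne_zero, mul_comm (1 + b)]

end AffineQuotient

section Gaussian

lemma integrable_cexp_neg_sq_mul_div_two {t : ℂ} (ht : 0 < t.re) :
    Integrable (fun w : ℝ => cexp (-(w : ℂ) ^ 2 * t / 2)) := by
  have hint := integrable_cexp_neg_mul_sq (b := t / 2) (by simpa using ht)
  convert! hint using 3
  ring

lemma unitaryFourier_cexp_neg_sq_mul_div_two {t : ℝ} (ht : 0 < t) (ω : ℝ) :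
    unitaryFourier (fun w => cexp (-(w : ℂ) ^ 2 * t / 2)) ω =
      ((Real.exp (-ω ^ 2 / (2 * t)) / Real.sqrt t : ℝ) : ℂ) := by
  have hgauss : ∫ w : ℝ, cexp (-(w : ℂ) ^ 2 * t / 2) * cexp (-I * ω * w) =
      ((Real.pi : ℂ) / (t / 2)) ^ (1 / 2 : ℂ) * cexp (-(-ω) ^ 2 / (4 * (t / 2))) := by
    rw [← fourierIntegral_gaussian (b := (t : ℂ) / 2) (by simpa using ht)]
    congr 1 with w
    rw [mul_comm]
    ring_nf
  have hconst : ((Real.pi : ℂ) / (t / 2)) ^ (1 / 2 : ℂ) =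
      ((Real.sqrt (2 * Real.pi) / Real.sqrt t : ℝ) : ℂ) := by
    rw [← Real.sqrt_div Real.two_pi_pos.le, Real.sqrt_eq_rpow, ofReal_cpow (by positivity)]
    push_cast
    congr 1
    ring
  have hexp : -(-(ω : ℂ)) ^ 2 / (4 * (t / 2)) = ((-ω ^ 2 / (2 * t) : ℝ) : ℂ) := by
    push_cast
    ring
  rw [unitaryFourier, hgauss, hconst, hexp, ← ofReal_exp, ofReal_div, ofReal_div,
    div_mul_eq_mul_div, mul_div_assoc, inv_mul_cancel_left₀ sqrt_two_pi_ne_zero]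

end Gaussian

theorem fourier_c2_term_general {A : ℝ} (hA : A ≠ 0) (b : ℂ) {t : ℝ} (ht : 0 < t) :
    Integrable (fun w : ℝ =>
      cexp (-(w : ℂ) ^ 2 * t / 2) * (b * (I * w) - A) / (I * w + A)) ∧
    ∀ ω : ℝ,
      unitaryFourier
          (fun w => cexp (-(w : ℂ) ^ 2 * t / 2) * (b * (I * w) - A) / (I * w + A)) ω =
        b / Real.sqrt t * Real.exp (-ω ^ 2 / (2 * t)) -
          (|A| : ℝ) / Real.sqrt t * (1 + b) *
            (∫ u : ℝ, expKernel A u * Real.exp (-(ω - u) ^ 2 / (2 * t)) : ℝ) := by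
  have hg : Integrable (fun w : ℝ => cexp (-(w : ℂ) ^ 2 * t / 2)) :=
    integrable_cexp_neg_sq_mul_div_two ht
  refine ⟨integrable_mul_affine_div hA b hg, fun ω => ?_⟩
  rw [unitaryFourier_mul_affine_div hA b hg]
  simp only [unitaryFourier_cexp_neg_sq_mul_div_two ht, ← ofReal_mul, integral_complex_ofReal,
    ← mul_div_assoc, integral_div]
  push_cast
  ring

/-- Fourier transform of w ↦ e^{-w²t/2} c₂(μ,y;iw)/(iw+βμ), where
c₂(μ,y;iw) = βs·iw - βμ and s = 2·1_{[z1,∞)}(y) - 1. -/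
theorem fourier_c2_term
    (z1 : ℝ) (β : ℝ) (hβ : β ∈ Set.Ioo (-1 : ℝ) 1) (hβ0 : β ≠ 0)
    (μ : ℝ) (hμ : μ ≠ 0) (t : ℝ) (ht : 0 < t) (y : ℝ) :
    let s : ℝ := 2 * (if z1 ≤ y then (1 : ℝ) else 0) - 1
    Integrable (fun w : ℝ =>
      Complex.exp (-(w : ℂ) ^ 2 * t / 2) *
        ((β : ℂ) * s * (Complex.I * w) - (β : ℂ) * μ) /
        (Complex.I * w + (β : ℂ) * μ)) ∧
    ∀ ω : ℝ,
      ((Real.sqrt (2 * Real.pi) : ℂ))⁻¹ *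
        (∫ w : ℝ,
          Complex.exp (-(w : ℂ) ^ 2 * t / 2) *
            ((β : ℂ) * s * (Complex.I * w) - (β : ℂ) * μ) /
            (Complex.I * w + (β : ℂ) * μ) *
            Complex.exp (-Complex.I * ω * w)) =
      ((β * s / Real.sqrt t * Real.exp (-ω ^ 2 / (2 * t)) -
        |β * μ| / Real.sqrt t * (1 + β * s) *
          ∫ u : ℝ, Real.exp (β * μ * u) * (if β * μ * u < 0 then (1 : ℝ) else 0) *
            Real.exp (-(ω - u) ^ 2 / (2 * t)) : ℝ) : ℂ) := by
  intro s
  have hterm := fourier_c2_term_general (mul_ne_zero hβ0 hμ) (β * s) ht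
  push_cast at hterm ⊢
  exact hterm
end

section
/- (Generalized rejection sampling.) Let g, h : ℝ → [0,∞) be measurable with 0 < ∫_ℝ g dx < ∞ and 0 < ∫_ℝ h dx < ∞, and suppose there exists M > 0 such that f(y) := h(y)/(M g(y)) satisfies 0 < f(y) ≤ 1 for all y ∈ ℝ (in particular g > 0 on ℝ). Let (f_n)_{n∈ℕ} be measurable functions and (δ_n)_{n∈ℕ} a decreasing sequence of positive reals tending to 0 with |f(y) − f_n(y)| < δ_n for all y ∈ ℝ and n ∈ ℕ. Let Y and U be independent random variables where Y has density g/∫g with respect to Lebesgue measure and U is uniform on [0,1], and let E be the event {∃ n ∈ ℕ : |U − f_n(Y)| > δ_n and U < f_n(Y)}. Then E = {U < f(Y)} (up to a ℙ-null set), ℙ(E) = (∫_ℝ h dx)/(M ∫_ℝ g dx) > 0, and for every Borel set A ⊆ ℝ, ℙ(Y ∈ A | E) = (∫_A h dx)/(∫_ℝ h dx); i.e. the conditional law of Y given E has density h/∫h. -/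
open MeasureTheory

/-!
A pair `(u, fₙ)` with `|f - fₙ| ≤ δₙ → 0` certifies `u < f` at some stage `n` exactly when `u < f`
holds, so the algorithm accepts precisely on `{U < f(Y)}`. Slicing the joint law of `(Y, U)` over
`Y`, a proposal `y` is accepted with probability `f(y)`; hence the law of `Y` restricted to
acceptance has density `f · g / ∫ g = h / (M ∫ g)`, and normalising it cancels `M ∫ g`.
-/

section

open ProbabilityTheory Filter Topology Set

theorem exists_lt_abs_sub_and_lt_iff {ι R : Type*} [Field R] [LinearOrder R]
    [IsStrictOrderedRing R] [TopologicalSpace R] [ClosedIciTopology R] {l : Filter ι} [l.NeBot]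
    {a δ : ι → R} {u x : R} (hδ : Tendsto δ l (𝓝 0)) (ha : ∀ i, |x - a i| ≤ δ i) :
    (∃ i, δ i < |u - a i| ∧ u < a i) ↔ u < x := by
  constructor
  · rintro ⟨i, hsep, hlt⟩
    rw [abs_of_neg (sub_neg.2 hlt)] at hsep
    linarith [neg_le_of_abs_le (ha i)]
  · intro hux
    obtain ⟨i, hi⟩ := (hδ.eventually_lt_const (half_pos (sub_pos.2 hux))).exists
    have hgap : δ i < a i - u := by linarith [le_of_abs_le (ha i)]
    have hlt : u < a i := sub_pos.1 (((abs_nonneg _).trans (ha i)).trans_lt hgap)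
    refine ⟨i, ?_, hlt⟩
    rwa [abs_sub_comm, abs_of_pos (sub_pos.2 hlt)]

theorem volume_restrict_Icc_apply_Iio (a : ℝ) {b t : ℝ} (ht : t ≤ b) :
    volume.restrict (Icc a b) (Iio t) = ENNReal.ofReal (t - a) := by
  have hinter : Iio t ∩ Icc a b = Ico a t := by
    ext u
    simp only [mem_inter_iff, mem_Iio, mem_Icc, mem_Ico]
    exact ⟨fun h ↦ ⟨h.2.1, h.1⟩, fun h ↦ ⟨h.2, h.1, h.2.le.trans ht⟩⟩
  rw [Measure.restrict_apply measurableSet_Iio, hinter, Real.volume_Ico]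

variable {Ω X : Type*} [MeasurableSpace Ω] [MeasurableSpace X] {P : Measure Ω} [IsFiniteMeasure P]
  {Y : Ω → X}

theorem hasLaw_restrict_prodMk_mem {Z : Type*} [MeasurableSpace Z] {V : Ω → Z} {ν : Measure X}
    {ρ : Measure Z} (hY : HasLaw Y ν P) (hV : HasLaw V ρ P) (hYV : IndepFun Y V P)
    {S : Set (X × Z)} (hS : MeasurableSet S) :
    HasLaw Y (ν.withDensity fun y ↦ ρ (Prod.mk y ⁻¹' S)) (P.restrict {ω | (Y ω, V ω) ∈ S}) where
  aemeasurable := hY.aemeasurable.restrict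
  map_eq := by
    have : IsFiniteMeasure ρ := hV.isFiniteMeasure_iff.1 inferInstance
    have hjoint : HasLaw (fun ω ↦ (Y ω, V ω)) (ν.prod ρ) P := hYV.hasLaw_prod hY hV
    ext A hA
    have hAS : MeasurableSet {p : X × Z | p.1 ∈ A ∧ p ∈ S} := (measurable_fst hA).inter hS
    calc (P.restrict {ω | (Y ω, V ω) ∈ S}).map Y A
        = P {ω | Y ω ∈ A ∧ (Y ω, V ω) ∈ S} := by
          rw [Measure.map_apply_of_aemeasurable hY.aemeasurable.restrict hA,
            Measure.restrict_apply₀ (hY.aemeasurable.restrict.nullMeasurable hA)]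
          rfl
      _ = ν.prod ρ {p | p.1 ∈ A ∧ p ∈ S} := hjoint.measure_eq hAS
      _ = ∫⁻ y, A.indicator (fun y ↦ ρ (Prod.mk y ⁻¹' S)) y ∂ν := by
          rw [Measure.prod_apply hAS]
          refine lintegral_congr fun y ↦ ?_
          by_cases hy : y ∈ A <;> simp [hy, preimage]
      _ = ν.withDensity (fun y ↦ ρ (Prod.mk y ⁻¹' S)) A := by
          rw [lintegral_indicator hA, withDensity_apply _ hA]

variable {U : Ω → ℝ} {f : X → ℝ}

theorem hasLaw_restrict_uniform_lt {ν : Measure X} (hY : HasLaw Y ν P)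
    (hU : HasLaw U (volume.restrict (Icc 0 1)) P) (hYU : IndepFun Y U P)
    (hf : Measurable f) (hf1 : ∀ y, f y ≤ 1) :
    HasLaw Y (ν.withDensity fun y ↦ ENNReal.ofReal (f y)) (P.restrict {ω | U ω < f (Y ω)}) := by
  have hS : MeasurableSet {p : X × ℝ | p.2 < f p.1} :=
    measurableSet_lt measurable_snd (hf.comp measurable_fst)
  have hslice (y : X) : volume.restrict (Icc 0 1) (Prod.mk y ⁻¹' {p : X × ℝ | p.2 < f p.1}) =
      ENNReal.ofReal (f y) :=
    (volume_restrict_Icc_apply_Iio 0 (hf1 y)).trans (by rw [sub_zero])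
  simpa only [hslice, mem_ofPred_eq] using hasLaw_restrict_prodMk_mem hY hU hYU hS

theorem hasLaw_restrict_uniform_lt_of_density {μ : Measure X} {p : X → ℝ}
    (hp : AEMeasurable p μ) (hY : HasLaw Y (μ.withDensity fun y ↦ ENNReal.ofReal (p y)) P)
    (hU : HasLaw U (volume.restrict (Icc 0 1)) P) (hYU : IndepFun Y U P)
    (hf : Measurable f) (hf01 : ∀ y, f y ∈ Icc 0 1) :
    HasLaw Y (μ.withDensity fun y ↦ ENNReal.ofReal (f y * p y))
      (P.restrict {ω | U ω < f (Y ω)}) := by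
  convert hasLaw_restrict_uniform_lt hY hU hYU hf fun y ↦ (hf01 y).2 using 1
  rw [← withDensity_mul₀ hp.ennreal_ofReal hf.ennreal_ofReal.aemeasurable]
  congr 1 with y
  rw [Pi.mul_apply, ENNReal.ofReal_mul (hf01 y).1, mul_comm]

theorem measure_mem_inter_uniform_lt {μ : Measure X} {p : X → ℝ} (hp : Integrable p μ)
    (hp0 : ∀ y, 0 ≤ p y) (hY : HasLaw Y (μ.withDensity fun y ↦ ENNReal.ofReal (p y)) P)
    (hU : HasLaw U (volume.restrict (Icc 0 1)) P) (hYU : IndepFun Y U P)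
    (hf : Measurable f) (hf01 : ∀ y, f y ∈ Icc 0 1) {A : Set X} (hA : MeasurableSet A) :
    P ({ω | Y ω ∈ A} ∩ {ω | U ω < f (Y ω)}) = ENNReal.ofReal (∫ y in A, f y * p y ∂μ) := by
  have hlaw := hasLaw_restrict_uniform_lt_of_density hp.aemeasurable hY hU hYU hf hf01
  have hint : Integrable (fun y ↦ f y * p y) μ :=
    hp.bdd_mul hf.aestronglyMeasurable
      (.of_forall fun y ↦ (Real.norm_of_nonneg (hf01 y).1).trans_le (hf01 y).2)
  have hnonneg (y : X) : 0 ≤ f y * p y := mul_nonneg (hf01 y).1 (hp0 y)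
  calc P ({ω | Y ω ∈ A} ∩ {ω | U ω < f (Y ω)})
      = P.restrict {ω | U ω < f (Y ω)} {ω | Y ω ∈ A} :=
        (Measure.restrict_apply₀ (hlaw.aemeasurable.nullMeasurable hA)).symm
    _ = ∫⁻ y in A, ENNReal.ofReal (f y * p y) ∂μ :=
        (hlaw.measure_eq hA).trans (withDensity_apply _ hA)
    _ = ENNReal.ofReal (∫ y in A, f y * p y ∂μ) :=
        (ofReal_integral_eq_lintegral_ofReal hint.integrableOn (.of_forall hnonneg)).symm

end

/-- `f` plays the role of `h / (M * g)`; the relation is stated without division, so nothing depends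
on the junk value of the quotient where `g` vanishes. -/
theorem generalized_rejection_sampling_general
    {Ω X ι : Type*} [MeasurableSpace Ω] [MeasurableSpace X]
    {P : Measure Ω} [IsProbabilityMeasure P] {μ : Measure X} {g h f : X → ℝ} {M : ℝ}
    (hg0 : ∀ y, 0 ≤ g y) (hgint : Integrable g μ)
    (hgpos : 0 < ∫ y, g y ∂μ) (hhpos : 0 < ∫ y, h y ∂μ) (hM : 0 < M)
    (hf : Measurable f) (hf01 : ∀ y, f y ∈ Set.Icc 0 1) (hfgh : ∀ y, f y * (M * g y) = h y)
    {l : Filter ι} [l.NeBot] {a : ι → X → ℝ} {δ : ι → ℝ} (hδ : Filter.Tendsto δ l (nhds 0))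
    (ha : ∀ i y, |f y - a i y| ≤ δ i) {Y : Ω → X} {U : Ω → ℝ}
    (hY : ProbabilityTheory.HasLaw Y
      (μ.withDensity fun y ↦ ENNReal.ofReal (g y / ∫ x, g x ∂μ)) P)
    (hU : ProbabilityTheory.HasLaw U (volume.restrict (Set.Icc 0 1)) P)
    (hYU : ProbabilityTheory.IndepFun Y U P) :
    let E : Set Ω := {ω | ∃ i, δ i < |U ω - a i (Y ω)| ∧ U ω < a i (Y ω)}
    E = {ω | U ω < f (Y ω)} ∧
      P E = ENNReal.ofReal ((∫ y, h y ∂μ) / (M * ∫ y, g y ∂μ)) ∧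
      0 < P E ∧
      ∀ A : Set X, MeasurableSet A →
        P ({ω | Y ω ∈ A} ∩ E) / P E =
          ENNReal.ofReal ((∫ y in A, h y ∂μ) / ∫ y, h y ∂μ) := by
  intro E
  have hE : E = {ω | U ω < f (Y ω)} :=
    Set.ext fun ω ↦ exists_lt_abs_sub_and_lt_iff hδ fun i ↦ ha i (Y ω)
  have hfp (y : X) : f y * (g y / ∫ x, g x ∂μ) = h y / (M * ∫ x, g x ∂μ) := by
    rw [← hfgh]
    field_simp
  have hjoint (A : Set X) (hA : MeasurableSet A) : P ({ω | Y ω ∈ A} ∩ E) =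
      ENNReal.ofReal ((∫ y in A, h y ∂μ) / (M * ∫ y, g y ∂μ)) := by
    rw [hE, measure_mem_inter_uniform_lt (hgint.div_const _)
      (fun y ↦ div_nonneg (hg0 y) hgpos.le) hY hU hYU hf hf01 hA]
    simp only [hfp, integral_div]
  have hPE : P E = ENNReal.ofReal ((∫ y, h y ∂μ) / (M * ∫ y, g y ∂μ)) := by
    simpa using hjoint Set.univ .univ
  have hpos : 0 < (∫ y, h y ∂μ) / (M * ∫ y, g y ∂μ) := by positivity
  refine ⟨hE, hPE, hPE ▸ ENNReal.ofReal_pos.2 hpos, fun A hA ↦ ?_⟩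
  rw [hjoint A hA, hPE, ← ENNReal.ofReal_div_of_pos hpos,
    div_div_div_cancel_right₀ (mul_pos hM hgpos).ne']

/-- generalized rejection sampling: if Y has density g/∫g, U is uniform
on [0,1] independent of Y, f = h/(Mg) ∈ (0,1] is approximated by computable f_n at rate
δ_n ↓ 0, then the acceptance event E = {∃n : |U - f_n(Y)| > δ_n, U < f_n(Y)} coincides
a.s. with {U < f(Y)}, has probability ∫h/(M∫g) > 0, and conditionally on E the law of Y
has density h/∫h. -/
theorem generalized_rejection_sampling
    {Ω : Type*} [MeasureSpace Ω] [IsProbabilityMeasure (volume : Measure Ω)]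
    (g h : ℝ → ℝ) (hgmeas : Measurable g) (hhmeas : Measurable h)
    (hg0 : ∀ x, 0 ≤ g x) (hh0 : ∀ x, 0 ≤ h x)
    (hgint : Integrable g) (hhint : Integrable h)
    (hgpos : 0 < ∫ x, g x) (hhpos : 0 < ∫ x, h x)
    (M : ℝ) (hM : 0 < M)
    (hf : ∀ y : ℝ, 0 < h y / (M * g y) ∧ h y / (M * g y) ≤ 1)
    (fn : ℕ → ℝ → ℝ) (hfnmeas : ∀ n, Measurable (fn n))
    (δ : ℕ → ℝ) (hδpos : ∀ n, 0 < δ n) (hδanti : Antitone δ)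
    (hδ0 : Filter.Tendsto δ Filter.atTop (nhds 0))
    (happrox : ∀ n y, |h y / (M * g y) - fn n y| < δ n)
    (Y U : Ω → ℝ) (hY : Measurable Y) (hUm : Measurable U)
    (hYlaw : Measure.map Y volume =
      volume.withDensity (fun x => ENNReal.ofReal (g x / ∫ u, g u)))
    (hUlaw : Measure.map U volume = volume.restrict (Set.Icc (0 : ℝ) 1))
    (hindep : ProbabilityTheory.IndepFun Y U) :
    let E : Set Ω := {ω | ∃ n : ℕ, δ n < |U ω - fn n (Y ω)| ∧ U ω < fn n (Y ω)}
    E =ᵐ[(volume : Measure Ω)] {ω : Ω | U ω < h (Y ω) / (M * g (Y ω))} ∧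
      volume E = ENNReal.ofReal ((∫ x, h x) / (M * ∫ x, g x)) ∧
      0 < volume E ∧
      ∀ A : Set ℝ, MeasurableSet A →
        volume ({ω : Ω | Y ω ∈ A} ∩ E) / volume E =
          ENNReal.ofReal ((∫ x in A, h x) / ∫ x, h x) := by
  have hMg (y : ℝ) : M * g y ≠ 0 := (div_ne_zero_iff.1 (hf y).1.ne').2
  exact (generalized_rejection_sampling_general hg0 hgint hgpos hhpos hM
    (hhmeas.div (hgmeas.const_mul M)) (fun y ↦ ⟨(hf y).1.le, (hf y).2⟩)
    (fun y ↦ div_mul_cancel₀ (h y) (hMg y)) hδ0 (fun n y ↦ (happrox n y).le)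
    ⟨hY.aemeasurable, hYlaw⟩ ⟨hUm.aemeasurable, hUlaw⟩ hindep).imp_left Eq.eventuallyEq
end

section
/- (Series expansion for the drifted two-barrier density integral.) Fix barriers z1 < z2 in ℝ with z = z2 − z1, β1, β2 ∈ (−1,1), and μ ∈ ℝ with β1μ > 0 and β2μ > 0. For x, y ∈ ℝ let a_1, a_2, a_3, a_4 be as below and let c_j(y,μ; iw) = (iw)² c_{j,0}(y) + iwμ c_{j,1}(y) + μ² c_{j,2}(y) with the coefficient tables below. Then for every t > 0 and x, y ∈ ℝ: −(1/2π) ∫_ℝ e^{−w²t/2} e^{−iw|x−y|} ( Σ_{j=1}^4 c_j(y,μ;iw) e^{−iw a_j(x,y)} ) / ( β1β2 e^{−2iwz}(w²+μ²) + (w − iβ1μ)(w − iβ2μ) ) dw = Σ_{k=0}^∞ (−β1β2)^k Σ_{j=1}^4 (1/2π) ∫_ℝ e^{−w²t/2} · ( − c_j(y,μ;iw) (w²+μ²)^k / [(w − iβ1μ)(w − iβ2μ)]^{k+1} ) · e^{−iw(a_j(x,y) + 2zk + |x−y|)} dw, where the integrals and the series converge absolutely. -/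
open Complex MeasureTheory

/-- The coefficient table c_{j,h}(y) for the drifted (β1,β2)-SBM. -/
noncomputable def cTab (z1 z2 β1 β2 y : ℝ) : Fin 4 → Fin 3 → ℝ :=
  let i1 : ℝ := if z1 ≤ y then 1 else 0
  let i2 : ℝ := if z2 ≤ y then 1 else 0
  let i12 : ℝ := if z1 ≤ y ∧ y < z2 then 1 else 0
  let c20 : ℝ := (2 * i1 - 1) * β1
  let c30 : ℝ := (2 * i2 - 1) * β2
  let c40 : ℝ := (1 - 2 * i12) * (β1 * β2)
  ![![1, β1 + β2, β1 * β2],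
    ![c20, -β1 - c40, β1 * c30],
    ![c30, -β2 + c40, -β2 * c20],
    ![c40, 0, -c40]]

/-- c_j(y,μ;ξ) = ξ² c_{j,0}(y) + ξ μ c_{j,1}(y) + μ² c_{j,2}(y). -/
noncomputable def cPoly (z1 z2 β1 β2 y μ : ℝ) (j : Fin 4) (ξ : ℂ) : ℂ :=
  ξ ^ 2 * (cTab z1 z2 β1 β2 y j 0) + ξ * μ * (cTab z1 z2 β1 β2 y j 1) +
    (μ : ℂ) ^ 2 * (cTab z1 z2 β1 β2 y j 2)

/-!
Put `P(w) = (w - iβ₁μ)(w - iβ₂μ)`, `R(w) = -β₁β₂ e^{-2iwz} (w² + μ²)` and `q = R / P`. The density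
integral has denominator `P - R`, and the series is the geometric expansion of `1 / (P - R)` in `q`.

In the lower half-plane `|β| |w - iμ| ≤ |w - iβμ|` whenever `|β| ≤ 1` and `βμ > 0`; used also for
`(-β, -μ)`, this gives `|q(w)| ≤ e^{2z Im w}`. On the real line that is no decay, and indeed
`q(0) = 1`, but shifting the contour to `Im w = -1` bounds the `k`-th integral by a multiple of
`e^{-2zk}`. The same equality `q(0) = 1` means that the denominator `P - R` vanishes at `w = 0`. The
zero is simple, and the coefficients `c_{j,2}` sum to zero, so the numerator vanishes there as well
and the density integrand is bounded near `0`. Away from `0` one has `|q| < 1` on the real line, so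
telescoping and dominated convergence identify the sum of the series with the density integral.
-/

open Asymptotics Filter Set Topology Interval

/-- Entire functions of exponential type, i.e. `‖f w‖ ≤ C * exp (R * ‖w‖)` for all `w`; the
filter `⊤` makes the `O` uniform on the whole plane. -/
structure IsExponentialType (f : ℂ → ℂ) : Prop where
  differentiable : Differentiable ℂ f
  isBigO_exp : ∃ R : ℝ, f =O[⊤] fun w : ℂ => Real.exp (R * ‖w‖)

namespace IsExponentialType

variable {f g : ℂ → ℂ}

theorem const (c : ℂ) : IsExponentialType fun _ => c :=
  ⟨differentiable_const c, 0, by simpa using isBigO_const_const c (one_ne_zero (α := ℝ)) ⊤⟩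

theorem id : IsExponentialType fun w => w := by
  refine ⟨differentiable_id, 1, isBigO_top.2 ⟨1, fun w => ?_⟩⟩
  rw [one_mul, one_mul, Real.norm_of_nonneg (Real.exp_nonneg _)]
  linarith [Real.add_one_le_exp ‖w‖]

theorem exp_mul_const (c : ℂ) : IsExponentialType fun w => Complex.exp (w * c) := by
  refine ⟨by fun_prop, ‖c‖, isBigO_top.2 ⟨1, fun w => ?_⟩⟩
  rw [one_mul, Real.norm_of_nonneg (Real.exp_nonneg _), mul_comm ‖c‖, ← norm_mul]
  exact norm_exp_le_exp_norm _

theorem isBigO_exp_of_le {R S : ℝ} (hRS : R ≤ S)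
    (hf : f =O[⊤] fun w : ℂ => Real.exp (R * ‖w‖)) :
    f =O[⊤] fun w : ℂ => Real.exp (S * ‖w‖) :=
  hf.trans <| .of_norm_le fun w => by
    rw [Real.norm_of_nonneg (Real.exp_nonneg _)]
    gcongr

theorem add (hf : IsExponentialType f) (hg : IsExponentialType g) :
    IsExponentialType fun w => f w + g w := by
  obtain ⟨R, hR⟩ := hf.isBigO_exp
  obtain ⟨S, hS⟩ := hg.isBigO_exp
  exact ⟨hf.differentiable.add hg.differentiable, max R S,
    (isBigO_exp_of_le (le_max_left R S) hR).add (isBigO_exp_of_le (le_max_right R S) hS)⟩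

theorem mul (hf : IsExponentialType f) (hg : IsExponentialType g) :
    IsExponentialType fun w => f w * g w := by
  obtain ⟨R, hR⟩ := hf.isBigO_exp
  obtain ⟨S, hS⟩ := hg.isBigO_exp
  exact ⟨hf.differentiable.mul hg.differentiable, R + S,
    (hR.mul hS).congr_right fun w => by rw [← Real.exp_add, add_mul]⟩

theorem neg (hf : IsExponentialType f) : IsExponentialType fun w => -f w := by
  simpa using (const (-1)).mul hf

theorem sum {ι : Type*} {f : ι → ℂ → ℂ} (s : Finset ι) (hf : ∀ j, IsExponentialType (f j)) :
    IsExponentialType fun w => ∑ j ∈ s, f j w := by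
  rw [← Finset.sum_fn]
  exact Finset.sum_induction f IsExponentialType (fun _ _ => add) (const 0) fun j _ => hf j

theorem exists_eq_mul_of_apply_zero (hf : IsExponentialType f) (hf0 : f 0 = 0) :
    ∃ g, IsExponentialType g ∧ ∀ w, f w = w * g w := by
  have hdiff : Differentiable ℂ (dslope f 0) := differentiableOn_univ.1 <|
    (Complex.differentiableOn_dslope univ_mem).2 hf.differentiable.differentiableOn
  obtain ⟨R, hR⟩ := hf.isBigO_exp
  refine ⟨dslope f 0, ⟨hdiff, max R 0, ?_⟩, fun w => ?_⟩
  · have hball : dslope f 0 =O[𝓟 (Metric.closedBall 0 1)]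
        fun w : ℂ => Real.exp (max R 0 * ‖w‖) :=
      (hdiff.continuous.continuousOn.isBigO_principal (isCompact_closedBall 0 1)
        (c := (1 : ℝ)) (by simp)).trans <| .of_norm_le fun w => by
          rw [norm_one, Real.one_le_exp_iff]
          positivity
    have hcompl : dslope f 0 =O[𝓟 (Metric.closedBall 0 1)ᶜ]
        fun w : ℂ => Real.exp (max R 0 * ‖w‖) := by
      refine .trans (isBigO_principal.2 ⟨1, fun w hw => ?_⟩)
        ((isBigO_exp_of_le (le_max_left R 0) hR).mono le_top)
      have hw : 1 < ‖w‖ := by simpa using hw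
      rw [dslope_of_ne f (norm_pos_iff.1 (one_pos.trans hw)), slope_def_field, hf0, sub_zero,
        sub_zero, norm_div, one_mul]
      exact div_le_self (norm_nonneg _) hw.le
    simpa using hball.sup hcompl
  · simpa [hf0] using (sub_smul_dslope f 0 w).symm

theorem exists_norm_gaussian_mul_le (hf : IsExponentialType f) {t : ℝ} (ht : 0 < t) (m : ℝ) :
    ∃ C, ∀ w : ℂ, |w.im| ≤ m →
      ‖Complex.exp (-w ^ 2 * t / 2) * f w‖ ≤ C * Real.exp (-(t / 4) * w.re ^ 2) := by
  obtain ⟨R, hR⟩ := hf.isBigO_exp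
  obtain ⟨C, hC, hbound⟩ := (isBigO_exp_of_le (le_abs_self R) hR).exists_nonneg
  rw [isBigOWith_top] at hbound
  refine ⟨C * Real.exp (m ^ 2 * t / 2 + |R| * m + R ^ 2 / t), fun w hw => ?_⟩
  have hre : (-w ^ 2 * t / 2).re = (w.im ^ 2 - w.re ^ 2) * t / 2 := by
    simp only [pow_two, neg_mul, div_ofNat_re, neg_re, mul_re, mul_im, ofReal_re, ofReal_im]
    ring
  have him : w.im ^ 2 ≤ m ^ 2 := sq_le_sq' (abs_le.1 hw).1 (abs_le.1 hw).2
  have hnorm : ‖w‖ ≤ |w.re| + m := (norm_le_abs_re_add_abs_im w).trans (by gcongr)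
  have hyoung : |R| * |w.re| ≤ t / 4 * w.re ^ 2 + R ^ 2 / t := by
    have hsq : t / 4 * w.re ^ 2 + R ^ 2 / t - |R| * |w.re| = (t * |w.re| / 2 - |R|) ^ 2 / t := by
      rw [← sq_abs w.re, ← sq_abs R]
      field_simp
      ring
    linarith [show 0 ≤ (t * |w.re| / 2 - |R|) ^ 2 / t by positivity]
  have hexp : (w.im ^ 2 - w.re ^ 2) * t / 2 + |R| * ‖w‖ ≤
      m ^ 2 * t / 2 + |R| * m + R ^ 2 / t + -(t / 4) * w.re ^ 2 := by
    nlinarith [abs_nonneg R]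
  calc ‖Complex.exp (-w ^ 2 * t / 2) * f w‖
      ≤ Real.exp ((w.im ^ 2 - w.re ^ 2) * t / 2) * (C * Real.exp (|R| * ‖w‖)) := by
        rw [norm_mul, Complex.norm_exp, hre]
        gcongr
        simpa using hbound w
    _ = C * Real.exp ((w.im ^ 2 - w.re ^ 2) * t / 2 + |R| * ‖w‖) := by
        rw [Real.exp_add]
        ring
    _ ≤ C * Real.exp (m ^ 2 * t / 2 + |R| * m + R ^ 2 / t + -(t / 4) * w.re ^ 2) := by
        gcongr
    _ = _ := by rw [Real.exp_add _ (-(t / 4) * w.re ^ 2), mul_assoc]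

end IsExponentialType

theorem tendsto_const_mul_exp_neg_mul_sq_cocompact (C : ℝ) {b : ℝ} (hb : 0 < b) :
    Tendsto (fun u : ℝ => C * Real.exp (-b * u ^ 2)) (cocompact ℝ) (𝓝 0) := by
  simpa using (tendsto_rpow_abs_mul_exp_neg_mul_sq_cocompact hb 0).const_mul C

section HorizontalLines

variable {E : Type*} [NormedAddCommGroup E] {f : ℂ → E} {g : ℝ → ℝ}

theorem integrable_horizontalLine {S : Set ℝ} {s : ℝ} (hs : s ∈ S) (hf : ContinuousOn f (im ⁻¹' S))
    (hg : Integrable g) (hfg : ∀ w, w.im ∈ S → ‖f w‖ ≤ g w.re) :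
    Integrable fun u : ℝ => f (u + s * I) := by
  refine hg.mono' (Continuous.aestronglyMeasurable ?_) (.of_forall fun u => ?_)
  · exact hf.comp_continuous (by fun_prop) fun u => by simpa using hs
  · simpa using hfg (u + s * I) (by simpa using hs)

theorem tendsto_integral_verticalSegment [NormedSpace ℝ E] {a b : ℝ} {l : Filter ℝ}
    (hfg : ∀ w : ℂ, w.im ∈ [[a, b]] → ‖f w‖ ≤ g w.re) (hg : Tendsto g l (𝓝 0)) :
    Tendsto (fun R : ℝ => ∫ s in a..b, f (R + s * I)) l (𝓝 0) := by
  refine squeeze_zero_norm (fun R => ?_) (by simpa using hg.mul_const |b - a|)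
  refine intervalIntegral.norm_integral_le_of_norm_le_const fun s hs => ?_
  simpa using hfg (R + s * I) (by simpa using uIoc_subset_uIcc hs)

variable [NormedSpace ℂ E]

theorem integral_horizontalLine_eq {a b : ℝ}
    (hf : DifferentiableOn ℂ f (im ⁻¹' [[a, b]])) (hg : Integrable g)
    (hg0 : Tendsto g (cocompact ℝ) (𝓝 0)) (hfg : ∀ w, w.im ∈ [[a, b]] → ‖f w‖ ≤ g w.re) :
    ∫ u : ℝ, f (u + a * I) = ∫ u : ℝ, f (u + b * I) := by
  have hline (s : ℝ) (hs : s ∈ [[a, b]]) :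
      Tendsto (fun R : ℝ => ∫ u in (-R)..R, f (u + s * I)) atTop (𝓝 (∫ u : ℝ, f (u + s * I))) :=
    intervalIntegral_tendsto_integral (integrable_horizontalLine hs hf.continuousOn hg hfg)
      tendsto_neg_atTop_atBot tendsto_id
  have hright := tendsto_integral_verticalSegment hfg (hg0.mono_left atTop_le_cocompact)
  have hleft := (tendsto_integral_verticalSegment hfg (hg0.mono_left atBot_le_cocompact)).comp
    tendsto_neg_atTop_atBot
  have hrect (R : ℝ) : (∫ u in (-R)..R, f (u + a * I)) - (∫ u in (-R)..R, f (u + b * I)) =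
      I • (∫ s in a..b, f ((-R : ℝ) + s * I)) - I • ∫ s in a..b, f (R + s * I) := by
    have hcauchy := integral_boundary_rect_eq_zero_of_differentiableOn f ⟨-R, a⟩ ⟨R, b⟩
      (hf.mono fun w hw => hw.2)
    simp only at hcauchy
    rw [sub_eq_zero, eq_comm, ← sub_eq_zero] at hcauchy
    rw [← sub_eq_zero, ← neg_eq_zero, ← hcauchy]
    abel
  refine sub_eq_zero.1 <| tendsto_nhds_unique
    ((hline a left_mem_uIcc).sub (hline b right_mem_uIcc)) ?_
  simp_rw [hrect]
  simpa using (hleft.const_smul I).sub (hright.const_smul I)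

end HorizontalLines

section GeometricSeries

theorem norm_integral_mul_pow_le {h q : ℂ → ℂ} {g : ℝ → ℝ} {a b ρ : ℝ}
    (hh : DifferentiableOn ℂ h (im ⁻¹' [[a, b]])) (hq : DifferentiableOn ℂ q (im ⁻¹' [[a, b]]))
    (hg : Integrable g) (hg0 : Tendsto g (cocompact ℝ) (𝓝 0))
    (hhg : ∀ w, w.im ∈ [[a, b]] → ‖h w‖ ≤ g w.re) (hq1 : ∀ w, w.im ∈ [[a, b]] → ‖q w‖ ≤ 1)
    (hqρ : ∀ w, w.im = b → ‖q w‖ ≤ ρ) (k : ℕ) :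
    Integrable (fun u : ℝ => h (u + a * I) * q (u + a * I) ^ k) ∧
      ‖∫ u : ℝ, h (u + a * I) * q (u + a * I) ^ k‖ ≤ (∫ u, g u) * ρ ^ k := by
  have hdiff : DifferentiableOn ℂ (fun w => h w * q w ^ k) (im ⁻¹' [[a, b]]) := hh.mul (hq.pow k)
  have hbound (w : ℂ) (hw : w.im ∈ [[a, b]]) : ‖h w * q w ^ k‖ ≤ g w.re := by
    rw [norm_mul, norm_pow]
    exact (mul_le_of_le_one_right (norm_nonneg _)
      (pow_le_one₀ (norm_nonneg _) (hq1 w hw))).trans (hhg w hw)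
  refine ⟨integrable_horizontalLine left_mem_uIcc hdiff.continuousOn hg hbound, ?_⟩
  rw [integral_horizontalLine_eq hdiff hg hg0 hbound, ← integral_mul_const]
  refine norm_integral_le_of_norm_le (hg.mul_const _) (.of_forall fun u => ?_)
  have hhu : ‖h (u + b * I)‖ ≤ g u := by
    simpa using hhg (u + b * I) (by simp)
  rw [norm_mul, norm_pow]
  gcongr
  · exact (norm_nonneg _).trans hhu
  · exact hqρ _ (by simp)

theorem tendsto_sum_integral_one_sub_mul_pow {α 𝕜 : Type*} [MeasurableSpace α] {ν : Measure α}
    [RCLike 𝕜] {F q : α → 𝕜} (hF : Integrable F ν) (hq : AEStronglyMeasurable q ν)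
    (hq1 : ∀ᵐ x ∂ν, ‖q x‖ < 1) :
    Tendsto (fun n => ∑ k ∈ Finset.range n, ∫ x, F x * (1 - q x) * q x ^ k ∂ν) atTop
      (𝓝 (∫ x, F x ∂ν)) := by
  have hFq (n : ℕ) : Integrable (fun x => F x * q x ^ n) ν :=
    hF.mul_bdd (c := 1) (hq.pow n) <| hq1.mono fun x hx => by
      simpa using pow_le_one₀ (norm_nonneg _) hx.le
  have hterm (k : ℕ) : ∫ x, F x * (1 - q x) * q x ^ k ∂ν =
      (∫ x, F x * q x ^ k ∂ν) - ∫ x, F x * q x ^ (k + 1) ∂ν := by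
    rw [← integral_sub (hFq k) (hFq (k + 1))]
    congr with x
    ring
  have hlim : Tendsto (fun n : ℕ => ∫ x, F x * q x ^ n ∂ν) atTop (𝓝 0) := by
    rw [← integral_zero α 𝕜]
    refine tendsto_integral_of_dominated_convergence (fun x => ‖F x‖)
      (fun n => (hFq n).aestronglyMeasurable) hF.norm (fun n => ?_) ?_
    · filter_upwards [hq1] with x hx
      rw [norm_mul, norm_pow]
      exact mul_le_of_le_one_right (norm_nonneg _) (pow_le_one₀ (norm_nonneg _) hx.le)
    · filter_upwards [hq1] with x hx
      simpa using (tendsto_pow_atTop_nhds_zero_of_norm_lt_one hx).const_mul (F x)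
  simp_rw [hterm, Finset.sum_range_sub']
  simpa using hlim.const_sub (∫ x, F x ∂ν)

end GeometricSeries

theorem exists_mul_abs_le_norm_of_hasDerivAt {E : Type*} [NormedAddCommGroup E] [NormedSpace ℝ E]
    {f : ℝ → E} {f' : E} {c : ℝ} (hf : HasDerivAt f f' 0) (hf0 : f 0 = 0) (hf' : f' ≠ 0)
    (hc : 0 < c) (hcf : ∀ w, c * w ^ 2 ≤ ‖f w‖) : ∃ C > 0, ∀ w, C * |w| ≤ ‖f w‖ := by
  have hslope : ∀ᶠ w in 𝓝[≠] 0, ‖f'‖ / 2 < ‖slope f 0 w‖ :=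
    hf.tendsto_slope.norm.eventually_const_lt (half_lt_self (norm_pos_iff.2 hf'))
  obtain ⟨δ, hδ, hnear⟩ := Metric.mem_nhdsWithin_iff.1 hslope
  refine ⟨min (‖f'‖ / 2) (c * δ), by positivity, fun w => ?_⟩
  rcases eq_or_ne w 0 with rfl | hw
  · simp
  rcases lt_or_ge |w| δ with hwδ | hwδ
  · have hlt : ‖f'‖ / 2 < ‖slope f 0 w‖ := hnear ⟨by simpa using hwδ, hw⟩
    rw [slope_def_module, hf0, sub_zero, sub_zero, norm_smul, norm_inv, Real.norm_eq_abs,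
      ← div_eq_inv_mul, lt_div_iff₀ (abs_pos.2 hw)] at hlt
    exact (mul_le_mul_of_nonneg_right (min_le_left _ _) (abs_nonneg w)).trans hlt.le
  · calc min (‖f'‖ / 2) (c * δ) * |w| ≤ c * δ * |w| := by gcongr; exact min_le_right _ _
      _ ≤ c * |w| * |w| := by gcongr
      _ = c * w ^ 2 := by rw [mul_assoc, abs_mul_abs_self, sq]
      _ ≤ ‖f w‖ := hcf w

section Barriers

/-- The product `(w - iβ₁μ)(w - iβ₂μ)`, whose powers are the denominators of the series. -/
noncomputable def poleProduct (β1 β2 μ : ℝ) (w : ℂ) : ℂ :=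
  (w - I * (β1 * μ)) * (w - I * (β2 * μ))

/-- The term `-β₁β₂ e^{-2iwz}(w² + μ²)` for a round trip between the barriers. The denominator of
the density integral is `poleProduct - reflectionTerm`. -/
noncomputable def reflectionTerm (β1 β2 μ z : ℝ) (w : ℂ) : ℂ :=
  -(β1 * β2) * Complex.exp (-2 * I * w * z) * (w ^ 2 + μ ^ 2)

variable {β β1 β2 μ z : ℝ} {w : ℂ}

theorem le_norm_sub_I_mul (c : ℝ) (hw : w.im ≤ 0) : c ≤ ‖w - I * c‖ := by
  have him : |w.im - c| ≤ ‖w - I * c‖ := by simpa using abs_im_le_norm (w - I * c)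
  linarith [neg_abs_le (w.im - c)]

theorem abs_mul_norm_sub_I_mul_le (hβ : |β| ≤ 1) (hβμ : 0 ≤ β * μ) (hw : w.im ≤ 0) :
    |β| * ‖w - I * μ‖ ≤ ‖w - I * (β * μ)‖ := by
  have hβ' : β ^ 2 ≤ 1 := (sq_le_one_iff_abs_le_one β).2 hβ
  have hcross : w.im * (β * μ * (1 - β)) ≤ 0 :=
    mul_nonpos_of_nonpos_of_nonneg hw (mul_nonneg hβμ (sub_nonneg.2 (abs_le.1 hβ).2))
  refine le_of_sq_le_sq ?_ (norm_nonneg _)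
  rw [mul_pow, sq_abs, Complex.sq_norm, Complex.sq_norm, normSq_apply, normSq_apply]
  simp only [sub_re, sub_im, mul_re, mul_im, I_re, I_im, ofReal_re, ofReal_im, zero_mul, one_mul,
    mul_zero, sub_zero, add_zero, zero_add]
  nlinarith [mul_nonneg (sub_nonneg.2 hβ') (sq_nonneg w.re),
    mul_nonneg (sub_nonneg.2 hβ') (sq_nonneg w.im)]

theorem norm_exp_neg_two_I_mul :
    ‖Complex.exp (-2 * I * w * z)‖ = Real.exp (2 * z * w.im) := by
  rw [Complex.norm_exp]
  congr 1
  simp only [neg_mul, neg_re, mul_re, mul_im, re_ofNat, im_ofNat, I_re, I_im, ofReal_re, ofReal_im]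
  ring

theorem norm_reflectionTerm_le (hβ1 : |β1| ≤ 1) (hβ2 : |β2| ≤ 1) (hμ1 : 0 ≤ β1 * μ)
    (hμ2 : 0 ≤ β2 * μ) (hw : w.im ≤ 0) :
    ‖reflectionTerm β1 β2 μ z w‖ ≤ Real.exp (2 * z * w.im) * ‖poleProduct β1 β2 μ w‖ := by
  have hfactor : w ^ 2 + (μ : ℂ) ^ 2 = (w - I * μ) * (w + I * μ) := by
    linear_combination (μ : ℂ) ^ 2 * I_sq
  have h1 : |β1| * ‖w - I * μ‖ ≤ ‖w - I * (β1 * μ)‖ := abs_mul_norm_sub_I_mul_le hβ1 hμ1 hw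
  have h2 : |β2| * ‖w + I * μ‖ ≤ ‖w - I * (β2 * μ)‖ := by
    simpa using abs_mul_norm_sub_I_mul_le (β := -β2) (μ := -μ) (by simpa) (by simpa) hw
  calc ‖reflectionTerm β1 β2 μ z w‖
      = Real.exp (2 * z * w.im) * ((|β1| * ‖w - I * μ‖) * (|β2| * ‖w + I * μ‖)) := by
        rw [reflectionTerm, hfactor, norm_mul, norm_mul, norm_exp_neg_two_I_mul]
        simp only [norm_neg, norm_mul, norm_real, Real.norm_eq_abs]
        ring
    _ ≤ Real.exp (2 * z * w.im) * ‖poleProduct β1 β2 μ w‖ := by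
        rw [poleProduct, norm_mul]
        gcongr

theorem mul_le_norm_poleProduct (hμ2 : 0 ≤ β2 * μ) (hw : w.im ≤ 0) :
    (β1 * μ) * (β2 * μ) ≤ ‖poleProduct β1 β2 μ w‖ := by
  have h1 := le_norm_sub_I_mul (β1 * μ) hw
  have h2 := le_norm_sub_I_mul (β2 * μ) hw
  push_cast at h1 h2
  rw [poleProduct, norm_mul]
  gcongr

theorem mul_pos_of_mul_right_pos (hμ1 : 0 < β1 * μ) (hμ2 : 0 < β2 * μ) : 0 < β1 * β2 :=
  pos_of_mul_pos_left (b := μ ^ 2) (by nlinarith [mul_pos hμ1 hμ2]) (sq_nonneg μ)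

theorem mul_sq_le_norm_poleProduct_sub (hβ : 0 ≤ β1 * β2) (w : ℝ) :
    (1 - β1 * β2) * w ^ 2 ≤ ‖poleProduct β1 β2 μ w‖ - ‖reflectionTerm β1 β2 μ z w‖ := by
  have hreflection : ‖reflectionTerm β1 β2 μ z w‖ = β1 * β2 * (w ^ 2 + μ ^ 2) := by
    rw [reflectionTerm, norm_mul, norm_mul, norm_exp_neg_two_I_mul, norm_neg]
    norm_cast
    rw [mul_zero, Real.exp_zero, mul_one, Real.norm_of_nonneg hβ,
      Real.norm_of_nonneg (by positivity)]
  have hpole : w ^ 2 + β1 * β2 * μ ^ 2 ≤ ‖poleProduct β1 β2 μ w‖ := by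
    refine le_of_sq_le_sq ?_ (norm_nonneg _)
    rw [poleProduct, Complex.sq_norm, normSq_apply]
    simp only [sub_re, sub_im, mul_re, mul_im, I_re, I_im, ofReal_re, ofReal_im, zero_mul, one_mul,
      mul_zero, sub_zero, zero_sub, add_zero, zero_add]
    nlinarith [sq_nonneg (w * μ * (β1 - β2))]
  linarith

theorem hasDerivAt_poleProduct_sub_reflectionTerm (β1 β2 μ z : ℝ) :
    HasDerivAt (fun w : ℝ => poleProduct β1 β2 μ w - reflectionTerm β1 β2 μ z w)
      (-I * ((β1 * μ + β2 * μ + 2 * z * (β1 * β2) * μ ^ 2 : ℝ) : ℂ)) 0 := by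
  have hpole : HasDerivAt (poleProduct β1 β2 μ) (-I * (β1 * μ) - I * (β2 * μ)) 0 := by
    convert! ((hasDerivAt_id (0 : ℂ)).sub_const (I * (β1 * μ))).mul
      ((hasDerivAt_id (0 : ℂ)).sub_const (I * (β2 * μ))) using 1
    simp only [id_eq, zero_sub, one_mul, mul_one]
    ring
  have hreflection : HasDerivAt (reflectionTerm β1 β2 μ z)
      (2 * I * z * (β1 * β2) * μ ^ 2) 0 := by
    convert! ((((hasDerivAt_id (0 : ℂ)).const_mul (-2 * I)).mul_const (z : ℂ)).cexp.const_mul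
      (-(β1 * β2) : ℂ)).mul (((hasDerivAt_id (0 : ℂ)).pow 2).add_const ((μ : ℂ) ^ 2)) using 1
    simp only [id_eq, Pi.pow_apply, mul_zero, zero_mul, Complex.exp_zero]
    ring
  convert! (hpole.sub hreflection).comp_ofReal (z := 0) using 1
  push_cast
  ring

theorem differentiable_poleProduct (β1 β2 μ : ℝ) : Differentiable ℂ (poleProduct β1 β2 μ) := by
  unfold poleProduct
  fun_prop

theorem differentiable_reflectionTerm (β1 β2 μ z : ℝ) :
    Differentiable ℂ (reflectionTerm β1 β2 μ z) := by
  unfold reflectionTerm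
  fun_prop

theorem poleProduct_ne_zero (hμ1 : 0 < β1 * μ) (hμ2 : 0 < β2 * μ) (hw : w.im ≤ 0) :
    poleProduct β1 β2 μ w ≠ 0 :=
  norm_pos_iff.1 <| (mul_pos hμ1 hμ2).trans_le (mul_le_norm_poleProduct hμ2.le hw)

theorem norm_reflectionTerm_div_poleProduct_le (hβ1 : |β1| ≤ 1) (hβ2 : |β2| ≤ 1)
    (hμ1 : 0 ≤ β1 * μ) (hμ2 : 0 ≤ β2 * μ) (hw : w.im ≤ 0) :
    ‖reflectionTerm β1 β2 μ z w / poleProduct β1 β2 μ w‖ ≤ Real.exp (2 * z * w.im) := by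
  rw [norm_div]
  exact div_le_of_le_mul₀ (norm_nonneg _) (Real.exp_nonneg _)
    (norm_reflectionTerm_le hβ1 hβ2 hμ1 hμ2 hw)

theorem norm_reflectionTerm_lt (hβ0 : 0 ≤ β1 * β2) (hβ : β1 * β2 < 1) {w : ℝ} (hw : w ≠ 0) :
    ‖reflectionTerm β1 β2 μ z w‖ < ‖poleProduct β1 β2 μ w‖ :=
  sub_pos.1 <| (mul_pos (sub_pos.2 hβ) (sq_pos_of_ne_zero hw)).trans_le
    (mul_sq_le_norm_poleProduct_sub hβ0 w)

theorem exists_mul_abs_le_norm_poleProduct_sub (hβ : β1 * β2 < 1) (hμ1 : 0 < β1 * μ)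
    (hμ2 : 0 < β2 * μ) (hz : 0 ≤ z) :
    ∃ c > 0, ∀ w : ℝ, c * |w| ≤ ‖poleProduct β1 β2 μ w - reflectionTerm β1 β2 μ z w‖ := by
  have hβ0 : 0 ≤ β1 * β2 := (mul_pos_of_mul_right_pos hμ1 hμ2).le
  refine exists_mul_abs_le_norm_of_hasDerivAt
    (hasDerivAt_poleProduct_sub_reflectionTerm β1 β2 μ z) ?_ ?_ (sub_pos.2 hβ) fun w =>
      (mul_sq_le_norm_poleProduct_sub hβ0 w).trans (norm_sub_norm_le _ _)
  · simp only [poleProduct, reflectionTerm, ofReal_zero, mul_zero, zero_mul, Complex.exp_zero]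
    linear_combination ((β1 : ℂ) * β2 * μ ^ 2) * I_sq
  · have hpos : 0 < β1 * μ + β2 * μ + 2 * z * (β1 * β2) * μ ^ 2 := by positivity
    exact mul_ne_zero (neg_ne_zero.2 I_ne_zero) (ofReal_ne_zero.2 hpos.ne')

variable {f : ℂ → ℂ} {t : ℝ}

theorem integrable_gaussian_mul_div_poleProduct_sub (hf : IsExponentialType f) (hf0 : f 0 = 0)
    (hβ : β1 * β2 < 1) (hμ1 : 0 < β1 * μ) (hμ2 : 0 < β2 * μ) (hz : 0 ≤ z) (ht : 0 < t) :
    Integrable fun w : ℝ => Complex.exp (-(w : ℂ) ^ 2 * t / 2) * f w /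
      (poleProduct β1 β2 μ w - reflectionTerm β1 β2 μ z w) := by
  obtain ⟨g, hg, hfg⟩ := hf.exists_eq_mul_of_apply_zero hf0
  obtain ⟨C, hC⟩ := hg.exists_norm_gaussian_mul_le ht 0
  obtain ⟨c, hc, hcw⟩ := exists_mul_abs_le_norm_poleProduct_sub hβ hμ1 hμ2 hz
  have hgauss : Integrable fun w : ℝ => Complex.exp (-(w : ℂ) ^ 2 * t / 2) * g w := by
    have hcont := hg.differentiable.continuous
    refine ((integrable_exp_neg_mul_sq (b := t / 4) (by positivity)).const_mul C).mono'
      (Continuous.aestronglyMeasurable (by fun_prop)) (.of_forall fun w => ?_)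
    simpa using hC w (by simp)
  have hP := (differentiable_poleProduct β1 β2 μ).continuous
  have hR := (differentiable_reflectionTerm β1 β2 μ z).continuous
  convert hgauss.mul_bdd (c := 1 / c) (g := fun w : ℝ =>
    w / (poleProduct β1 β2 μ w - reflectionTerm β1 β2 μ z w)) ?_ (.of_forall fun w => ?_) using 2
  · rw [hfg]
    ring
  · exact ((Continuous.measurable (by fun_prop)).div
      (Continuous.measurable (by fun_prop))).aestronglyMeasurable
  · rw [norm_div, norm_real, Real.norm_eq_abs]
    refine div_le_of_le_mul₀ (norm_nonneg _) (by positivity) ?_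
    rw [one_div, ← div_eq_inv_mul, le_div_iff₀' hc]
    exact hcw w

/-- The `k`-th term of the geometric expansion of `e^{-w²t/2} f(w) / (P(w) - R(w))` in powers of
`R/P`, where `P = poleProduct β1 β2 μ` and `R = reflectionTerm β1 β2 μ z`. -/
noncomputable def geometricTerm (β1 β2 μ z t : ℝ) (f : ℂ → ℂ) (k : ℕ) : ℝ → ℂ :=
  fun w => Complex.exp (-(w : ℂ) ^ 2 * t / 2) * f w / poleProduct β1 β2 μ w *
    (reflectionTerm β1 β2 μ z w / poleProduct β1 β2 μ w) ^ k

theorem exists_norm_integral_geometricTerm_le (hf : IsExponentialType f)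
    (hβ1 : |β1| ≤ 1) (hβ2 : |β2| ≤ 1) (hμ1 : 0 < β1 * μ) (hμ2 : 0 < β2 * μ) (hz : 0 ≤ z)
    (ht : 0 < t) :
    ∃ C, ∀ k : ℕ, Integrable (geometricTerm β1 β2 μ z t f k) ∧
      ‖∫ w : ℝ, geometricTerm β1 β2 μ z t f k w‖ ≤ C * Real.exp (-2 * z) ^ k := by
  obtain ⟨C, hC⟩ := hf.exists_norm_gaussian_mul_le ht 1
  have hstrip {s : ℝ} : s ∈ [[0, -1]] ↔ -1 ≤ s ∧ s ≤ 0 := by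
    rw [uIcc_of_ge (by norm_num), mem_Icc]
  have hP0 (w : ℂ) (hw : w.im ∈ [[0, -1]]) : poleProduct β1 β2 μ w ≠ 0 :=
    poleProduct_ne_zero hμ1 hμ2 (hstrip.1 hw).2
  have hP := (differentiable_poleProduct β1 β2 μ).differentiableOn (s := im ⁻¹' [[0, -1]])
  have hR := (differentiable_reflectionTerm β1 β2 μ z).differentiableOn (s := im ⁻¹' [[0, -1]])
  have hgauss : Differentiable ℂ fun w => Complex.exp (-w ^ 2 * t / 2) * f w := by
    have hdiff := hf.differentiable
    fun_prop
  have hbound (w : ℂ) (hw : w.im ∈ [[0, -1]]) :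
      ‖Complex.exp (-w ^ 2 * t / 2) * f w / poleProduct β1 β2 μ w‖ ≤
        C / (β1 * μ * (β2 * μ)) * Real.exp (-(t / 4) * w.re ^ 2) := by
    obtain ⟨hw1, hw0⟩ := hstrip.1 hw
    have hCw := hC w (abs_le.2 ⟨hw1, hw0.trans zero_le_one⟩)
    rw [norm_div, div_mul_eq_mul_div]
    gcongr
    · exact (norm_nonneg _).trans hCw
    · exact mul_le_norm_poleProduct hμ2.le hw0
  have hratio (w : ℂ) (hw : w.im ∈ [[0, -1]]) :=
    norm_reflectionTerm_div_poleProduct_le (z := z) hβ1 hβ2 hμ1.le hμ2.le (hstrip.1 hw).2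
  have hmain := norm_integral_mul_pow_le (hgauss.differentiableOn.div hP hP0) (hR.div hP hP0)
    ((integrable_exp_neg_mul_sq (b := t / 4) (by positivity)).const_mul _)
    (tendsto_const_mul_exp_neg_mul_sq_cocompact _ (by positivity)) hbound
    (fun w hw => (hratio w hw).trans <| Real.exp_le_one_iff.2 <|
      mul_nonpos_of_nonneg_of_nonpos (by positivity) (hstrip.1 hw).2)
    (ρ := Real.exp (-2 * z)) (fun w hw => (hratio w (by simp [hw])).trans_eq (by rw [hw]; ring_nf))
  unfold geometricTerm
  exact ⟨_, by simpa only [Pi.div_apply, ofReal_zero, zero_mul, add_zero] using hmain⟩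

theorem summable_norm_integral_geometricTerm (hf : IsExponentialType f) (hβ1 : |β1| ≤ 1)
    (hβ2 : |β2| ≤ 1) (hμ1 : 0 < β1 * μ) (hμ2 : 0 < β2 * μ) (hz : 0 < z) (ht : 0 < t) :
    Summable fun k : ℕ => ‖∫ w : ℝ, geometricTerm β1 β2 μ z t f k w‖ := by
  obtain ⟨C, hC⟩ := exists_norm_integral_geometricTerm_le hf hβ1 hβ2 hμ1 hμ2 hz.le ht
  exact .of_nonneg_of_le (fun _ => norm_nonneg _) (fun k => (hC k).2) <|
    (summable_geometric_of_lt_one (Real.exp_nonneg _)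
      (Real.exp_lt_one_iff.2 (by linarith))).mul_left C

theorem hasSum_integral_geometricTerm (hf : IsExponentialType f)
    (hf0 : f 0 = 0) (hβ1 : |β1| ≤ 1) (hβ2 : |β2| ≤ 1) (hβ : β1 * β2 < 1) (hμ1 : 0 < β1 * μ)
    (hμ2 : 0 < β2 * μ) (hz : 0 < z) (ht : 0 < t) :
    HasSum (fun k : ℕ => ∫ w : ℝ, geometricTerm β1 β2 μ z t f k w)
      (∫ w : ℝ, Complex.exp (-(w : ℂ) ^ 2 * t / 2) * f w /
        (poleProduct β1 β2 μ w - reflectionTerm β1 β2 μ z w)) := by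
  have hP := (differentiable_poleProduct β1 β2 μ).continuous
  have hR := (differentiable_reflectionTerm β1 β2 μ z).continuous
  have hlt {w : ℝ} (hw : w ≠ 0) : ‖reflectionTerm β1 β2 μ z w‖ < ‖poleProduct β1 β2 μ w‖ :=
    norm_reflectionTerm_lt (mul_pos_of_mul_right_pos hμ1 hμ2).le hβ hw
  have htelescope := tendsto_sum_integral_one_sub_mul_pow
    (integrable_gaussian_mul_div_poleProduct_sub hf hf0 hβ hμ1 hμ2 hz.le ht)
    (q := fun w : ℝ => reflectionTerm β1 β2 μ z w / poleProduct β1 β2 μ w)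
    ((Continuous.measurable (by fun_prop)).div
      (Continuous.measurable (by fun_prop))).aestronglyMeasurable
    ((Measure.ae_ne volume 0).mono fun w hw => by
      rw [norm_div]
      exact (div_lt_one ((norm_nonneg _).trans_lt (hlt hw))).2 (hlt hw))
  refine (summable_norm_integral_geometricTerm hf hβ1 hβ2 hμ1 hμ2 hz ht).of_norm
    |>.hasSum_iff_tendsto_nat.2 <| htelescope.congr fun n =>
    Finset.sum_congr rfl fun k _ => integral_congr_ae ?_
  filter_upwards [Measure.ae_ne volume 0] with w hw
  have hPw : poleProduct β1 β2 μ w ≠ 0 := poleProduct_ne_zero hμ1 hμ2 (by simp)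
  have hPRw : poleProduct β1 β2 μ w - reflectionTerm β1 β2 μ z w ≠ 0 :=
    sub_ne_zero.2 fun h => (hlt hw).ne (by rw [h])
  simp only [geometricTerm]
  congr 1
  field_simp

theorem geometricTerm_sum {ι : Type*} (s : Finset ι) (f : ι → ℂ → ℂ) (k : ℕ) (w : ℝ) :
    geometricTerm β1 β2 μ z t (fun w => ∑ j ∈ s, f j w) k w =
      ∑ j ∈ s, geometricTerm β1 β2 μ z t (f j) k w := by
  simp only [geometricTerm, Finset.mul_sum, Finset.sum_div, Finset.sum_mul]

end Barriers

section SeriesExpansion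

/-- The integrand of the density integral, with an arbitrary finite family of numerators `p j` and
exponents `a j`; `z` is the distance of the barriers and `d` the distance `|x - y|`. -/
noncomputable def densityIntegrand {ι : Type*} [Fintype ι] (β1 β2 μ z t : ℝ) (p : ι → ℂ → ℂ)
    (a : ι → ℝ) (d : ℝ) : ℝ → ℂ := fun w =>
  Complex.exp (-(w : ℂ) ^ 2 * t / 2) * Complex.exp (-I * w * d) *
    (∑ j, p j w * Complex.exp (-I * w * a j)) /
    ((β1 * β2 : ℂ) * Complex.exp (-2 * I * w * z) * ((w : ℂ) ^ 2 + (μ : ℂ) ^ 2) +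
      poleProduct β1 β2 μ w)

/-- The integrand of the `k`-th term of the series for a single numerator `p` and exponent `a`,
without the factor `(-β₁β₂)^k`. -/
noncomputable def seriesIntegrand (β1 β2 μ z t : ℝ) (p : ℂ → ℂ) (a d : ℝ) (k : ℕ) :
    ℝ → ℂ := fun w =>
  Complex.exp (-(w : ℂ) ^ 2 * t / 2) *
    (-(p w) * ((w : ℂ) ^ 2 + (μ : ℂ) ^ 2) ^ k / poleProduct β1 β2 μ w ^ (k + 1)) *
    Complex.exp (-I * w * (a + 2 * z * k + d))

/-- The numerator `-p(w) e^{-iwb}`, the sign being that of the coefficients of the series. -/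
noncomputable def waveNumerator (p : ℂ → ℂ) (b : ℝ) (w : ℂ) : ℂ :=
  -p w * Complex.exp (w * (-I * b))

theorem IsExponentialType.waveNumerator {p : ℂ → ℂ} (hp : IsExponentialType p) (b : ℝ) :
    IsExponentialType (waveNumerator p b) :=
  hp.neg.mul (exp_mul_const _)

variable {β1 β2 μ z t : ℝ}

theorem pow_mul_seriesIntegrand (p : ℂ → ℂ) (a d : ℝ) (k : ℕ) (w : ℝ) :
    ((-(β1 * β2) : ℝ) : ℂ) ^ k * seriesIntegrand β1 β2 μ z t p a d k w =
      geometricTerm β1 β2 μ z t (waveNumerator p (a + d)) k w := by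
  have hexp : Complex.exp (-I * w * (a + 2 * z * k + d)) =
      Complex.exp (w * (-I * (a + d))) * Complex.exp (-2 * I * w * z) ^ k := by
    rw [← Complex.exp_nat_mul, ← Complex.exp_add]
    ring_nf
  simp only [seriesIntegrand, geometricTerm, waveNumerator, reflectionTerm, hexp, div_pow,
    mul_pow]
  push_cast
  ring

theorem densityIntegrand_eq_neg_div {ι : Type*} [Fintype ι] (p : ι → ℂ → ℂ) (a : ι → ℝ) (d w : ℝ) :
    densityIntegrand β1 β2 μ z t p a d w =
      -(Complex.exp (-(w : ℂ) ^ 2 * t / 2) * (∑ j, waveNumerator (p j) (a j + d) w) /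
        (poleProduct β1 β2 μ w - reflectionTerm β1 β2 μ z w)) := by
  have hexp (j : ι) : waveNumerator (p j) (a j + d) w =
      -(Complex.exp (-I * w * d) * (p j w * Complex.exp (-I * w * a j))) := by
    rw [waveNumerator, neg_mul, mul_left_comm (Complex.exp _), ← Complex.exp_add]
    push_cast
    ring_nf
  simp_rw [densityIntegrand, hexp, Finset.sum_neg_distrib, ← Finset.mul_sum, reflectionTerm]
  ring

theorem integrable_seriesIntegrand {p : ℂ → ℂ} (hp : IsExponentialType p) (hβ1 : |β1| ≤ 1)
    (hβ2 : |β2| ≤ 1) (hμ1 : 0 < β1 * μ) (hμ2 : 0 < β2 * μ) (hz : 0 ≤ z) (ht : 0 < t) (a d : ℝ)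
    (k : ℕ) : Integrable (seriesIntegrand β1 β2 μ z t p a d k) := by
  obtain ⟨_, hC⟩ := exists_norm_integral_geometricTerm_le (hp.waveNumerator (a + d)) hβ1 hβ2
    hμ1 hμ2 hz ht
  have hβ : ((-(β1 * β2) : ℝ) : ℂ) ^ k ≠ 0 :=
    pow_ne_zero k <| ofReal_ne_zero.2 (neg_ne_zero.2 (mul_pos_of_mul_right_pos hμ1 hμ2).ne')
  rw [← integrable_const_mul_iff hβ.isUnit]
  simpa only [pow_mul_seriesIntegrand] using (hC k).1

theorem pow_mul_integral_seriesIntegrand (p : ℂ → ℂ) (a d : ℝ) (k : ℕ) :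
    ((-(β1 * β2) : ℝ) : ℂ) ^ k *
        ((1 / (2 * Real.pi) : ℂ) * ∫ w : ℝ, seriesIntegrand β1 β2 μ z t p a d k w) =
      (1 / (2 * Real.pi) : ℂ) *
        ∫ w : ℝ, geometricTerm β1 β2 μ z t (waveNumerator p (a + d)) k w := by
  rw [mul_left_comm, ← integral_const_mul]
  simp only [pow_mul_seriesIntegrand]

theorem series_expansion_drifted_two_barriers_general {ι : Type*} [Fintype ι] {p : ι → ℂ → ℂ}
    (hp : ∀ j, IsExponentialType (p j)) (hp0 : ∑ j, p j 0 = 0) (a : ι → ℝ) (d : ℝ)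
    (hβ1 : |β1| ≤ 1) (hβ2 : |β2| ≤ 1) (hβ : β1 * β2 < 1) (hμ1 : 0 < β1 * μ) (hμ2 : 0 < β2 * μ)
    (hz : 0 < z) (ht : 0 < t) :
    Integrable (densityIntegrand β1 β2 μ z t p a d) ∧
    (∀ k j, Integrable (seriesIntegrand β1 β2 μ z t (p j) (a j) d k)) ∧
    Summable (fun k : ℕ => ∑ j, ‖((-(β1 * β2) : ℝ) : ℂ) ^ k * ((1 / (2 * Real.pi) : ℂ) *
      ∫ w : ℝ, seriesIntegrand β1 β2 μ z t (p j) (a j) d k w)‖) ∧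
    -(1 / (2 * Real.pi) : ℂ) * ∫ w : ℝ, densityIntegrand β1 β2 μ z t p a d w =
      ∑' k : ℕ, ((-(β1 * β2) : ℝ) : ℂ) ^ k * ∑ j, (1 / (2 * Real.pi) : ℂ) *
        ∫ w : ℝ, seriesIntegrand β1 β2 μ z t (p j) (a j) d k w := by
  have hwave (j : ι) := (hp j).waveNumerator (a j + d)
  have hsum := IsExponentialType.sum Finset.univ hwave
  have hsum0 : ∑ j, waveNumerator (p j) (a j + d) 0 = 0 := by
    simp [waveNumerator, hp0]
  refine ⟨?_, fun k j => integrable_seriesIntegrand (hp j) hβ1 hβ2 hμ1 hμ2 hz.le ht _ _ k, ?_, ?_⟩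
  · rw [funext (densityIntegrand_eq_neg_div p a d)]
    exact (integrable_gaussian_mul_div_poleProduct_sub hsum hsum0 hβ hμ1 hμ2 hz.le ht).neg
  · simp_rw [pow_mul_integral_seriesIntegrand, norm_mul]
    exact summable_sum fun j _ =>
      (summable_norm_integral_geometricTerm (hwave j) hβ1 hβ2 hμ1 hμ2 hz ht).mul_left _
  · simp_rw [Finset.mul_sum, pow_mul_integral_seriesIntegrand, ← Finset.mul_sum]
    have hint (k : ℕ) :
        ∑ j, ∫ w : ℝ, geometricTerm β1 β2 μ z t (waveNumerator (p j) (a j + d)) k w =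
          ∫ u : ℝ, geometricTerm β1 β2 μ z t
            (fun w => ∑ j, waveNumerator (p j) (a j + d) w) k u := by
      simp_rw [geometricTerm_sum]
      refine (integral_finsetSum _ fun j _ => ?_).symm
      obtain ⟨_, hC⟩ :=
        exists_norm_integral_geometricTerm_le (hwave j) hβ1 hβ2 hμ1 hμ2 hz.le ht
      exact (hC k).1
    simp_rw [hint, densityIntegrand_eq_neg_div, integral_neg, neg_mul_neg]
    exact ((hasSum_integral_geometricTerm hsum hsum0 hβ1 hβ2 hβ hμ1 hμ2 hz ht).mul_left
      _).tsum_eq.symm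

end SeriesExpansion

theorem sum_cTab_two {z1 z2 : ℝ} (hz : z1 ≤ z2) (β1 β2 y : ℝ) :
    ∑ j, cTab z1 z2 β1 β2 y j 2 = 0 := by
  have hcolumn : ∑ j, cTab z1 z2 β1 β2 y j 2 =
      β1 * β2 + β1 * ((2 * (if z2 ≤ y then 1 else 0) - 1) * β2) +
        -β2 * ((2 * (if z1 ≤ y then 1 else 0) - 1) * β1) +
        -((1 - 2 * (if z1 ≤ y ∧ y < z2 then 1 else 0)) * (β1 * β2)) :=
    Fin.sum_univ_four _
  rw [hcolumn]
  rcases lt_or_ge y z1 with h1 | h1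
  · simp only [h1.not_ge, (h1.trans_le hz).not_ge, false_and, ↓reduceIte]
    ring
  rcases lt_or_ge y z2 with h2 | h2
  · simp only [h1, h2, h2.not_ge, and_self, ↓reduceIte]
    ring
  · simp only [h1, h2, h2.not_gt, and_false, ↓reduceIte]
    ring

theorem sum_cPoly_zero {z1 z2 : ℝ} (hz : z1 ≤ z2) (β1 β2 y μ : ℝ) :
    ∑ j, cPoly z1 z2 β1 β2 y μ j 0 = 0 := by
  have hsum : ∑ j, (cTab z1 z2 β1 β2 y j 2 : ℂ) = 0 := mod_cast sum_cTab_two hz β1 β2 y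
  simp [cPoly, ← Finset.mul_sum, hsum]

theorem isExponentialType_cPoly_I_mul (z1 z2 β1 β2 y μ : ℝ) (j : Fin 4) :
    IsExponentialType fun w => cPoly z1 z2 β1 β2 y μ j (I * w) := by
  have hI : IsExponentialType fun w => I * w := .mul (.const I) .id
  simp only [cPoly, sq (I * _)]
  exact (((hI.mul hI).mul (.const _)).add ((hI.mul (.const _)).mul (.const _))).add (.const _)

/-- series expansion for the drifted two-barrier density integral. -/
theorem series_expansion_drifted_two_barriers
    (z1 z2 : ℝ) (hz : z1 < z2) (β1 β2 : ℝ)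
    (hβ1 : β1 ∈ Set.Ioo (-1 : ℝ) 1) (hβ2 : β2 ∈ Set.Ioo (-1 : ℝ) 1)
    (μ : ℝ) (hμ1 : 0 < β1 * μ) (hμ2 : 0 < β2 * μ)
    (t : ℝ) (ht : 0 < t) (x y : ℝ) :
    Integrable (fun w : ℝ =>
        Complex.exp (-(w : ℂ) ^ 2 * t / 2) * Complex.exp (-Complex.I * w * |x - y|) *
          (∑ j : Fin 4, cPoly z1 z2 β1 β2 y μ j (Complex.I * w) *
            Complex.exp (-Complex.I * w * (aSBM z1 z2 x y j))) /
          ((β1 * β2 : ℂ) * Complex.exp (-2 * Complex.I * w * (z2 - z1)) *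
              ((w : ℂ) ^ 2 + (μ : ℂ) ^ 2) +
            ((w : ℂ) - Complex.I * (β1 * μ)) * ((w : ℂ) - Complex.I * (β2 * μ)))) ∧
    (∀ (k : ℕ) (j : Fin 4), Integrable (fun w : ℝ =>
        Complex.exp (-(w : ℂ) ^ 2 * t / 2) *
          (-(cPoly z1 z2 β1 β2 y μ j (Complex.I * w)) *
              ((w : ℂ) ^ 2 + (μ : ℂ) ^ 2) ^ k /
            (((w : ℂ) - Complex.I * (β1 * μ)) *
               ((w : ℂ) - Complex.I * (β2 * μ))) ^ (k + 1)) *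
          Complex.exp (-Complex.I * w * (aSBM z1 z2 x y j + 2 * (z2 - z1) * k + |x - y|)))) ∧
    Summable (fun k : ℕ =>
      ∑ j : Fin 4, ‖((-(β1 * β2) : ℝ) : ℂ) ^ k * ((1 / (2 * Real.pi) : ℂ) *
        ∫ w : ℝ,
          Complex.exp (-(w : ℂ) ^ 2 * t / 2) *
            (-(cPoly z1 z2 β1 β2 y μ j (Complex.I * w)) *
                ((w : ℂ) ^ 2 + (μ : ℂ) ^ 2) ^ k /
              (((w : ℂ) - Complex.I * (β1 * μ)) *
                 ((w : ℂ) - Complex.I * (β2 * μ))) ^ (k + 1)) *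
            Complex.exp (-Complex.I * w *
              (aSBM z1 z2 x y j + 2 * (z2 - z1) * k + |x - y|)))‖) ∧
    -(1 / (2 * Real.pi) : ℂ) *
        (∫ w : ℝ,
          Complex.exp (-(w : ℂ) ^ 2 * t / 2) * Complex.exp (-Complex.I * w * |x - y|) *
            (∑ j : Fin 4, cPoly z1 z2 β1 β2 y μ j (Complex.I * w) *
              Complex.exp (-Complex.I * w * (aSBM z1 z2 x y j))) /
            ((β1 * β2 : ℂ) * Complex.exp (-2 * Complex.I * w * (z2 - z1)) *
                ((w : ℂ) ^ 2 + (μ : ℂ) ^ 2) +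
              ((w : ℂ) - Complex.I * (β1 * μ)) * ((w : ℂ) - Complex.I * (β2 * μ)))) =
      ∑' k : ℕ, ((-(β1 * β2) : ℝ) : ℂ) ^ k *
        ∑ j : Fin 4, (1 / (2 * Real.pi) : ℂ) *
          ∫ w : ℝ,
            Complex.exp (-(w : ℂ) ^ 2 * t / 2) *
              (-(cPoly z1 z2 β1 β2 y μ j (Complex.I * w)) *
                  ((w : ℂ) ^ 2 + (μ : ℂ) ^ 2) ^ k /
                (((w : ℂ) - Complex.I * (β1 * μ)) *
                   ((w : ℂ) - Complex.I * (β2 * μ))) ^ (k + 1)) *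
              Complex.exp (-Complex.I * w *
                (aSBM z1 z2 x y j + 2 * (z2 - z1) * k + |x - y|)) := by
  have hβ : |β1| < 1 ∧ |β2| < 1 := ⟨abs_lt.2 hβ1, abs_lt.2 hβ2⟩
  have hβ12 : β1 * β2 < 1 := (le_abs_self _).trans_lt <| by
    simpa only [abs_mul] using mul_lt_one_of_nonneg_of_lt_one_left (abs_nonneg _) hβ.1 hβ.2.le
  have hmain := series_expansion_drifted_two_barriers_general (d := |x - y|) (a := aSBM z1 z2 x y)
    (isExponentialType_cPoly_I_mul z1 z2 β1 β2 y μ)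
    (by simpa only [mul_zero] using sum_cPoly_zero hz.le β1 β2 y μ)
    hβ.1.le hβ.2.le hβ12 hμ1 hμ2 (sub_pos.2 hz) ht
  unfold densityIntegrand seriesIntegrand poleProduct at hmain
  simpa only [ofReal_sub] using hmain
end
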